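/- arXiv:1506.02367 — 4 statements merged into one kernel-verified Lean document; each statement's English description precedes it below -/
import Mathlib

section
/- Let L n be the number of lambda terms of size n and H n the number of head normal forms of size n. Then the density of head normal forms among plain lambda terms is ρ/(1 − ρ): the sequence n ↦ H n / L n converges to ρ/(1 − ρ) ≈ 0.41964 as n → ∞. -/
/-- Lambda terms with de Bruijn indices. -/
inductive Term : Type
  | var : ℕ → Term
  | app : Term → Term → Term
  | abs : Term → Term

namespace Term

/-- Natural size: every operator (zero, successor, application, abstraction) has size 1. -/
def size : Term → ℕ
  | var k => k + 1
  | app M N => M.size + N.size + 1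
  | abs M => M.size + 1

end Term

/-- `L n` is the number of lambda terms of size `n`. -/
noncomputable def L (n : ℕ) : ℕ := Nat.card {t : Term // t.size = n}


/-- Neutral head normal forms: terms of the form `app (app … (app (var k) N₁) …) N_p`
with `p ≥ 0` and arbitrary terms `N₁, …, N_p`. -/
inductive IsNeutralHnf : Term → Prop
  | var (k : ℕ) : IsNeutralHnf (Term.var k)
  | app {m : Term} (n : Term) : IsNeutralHnf m → IsNeutralHnf (Term.app m n)

/-- `K n` is the number of neutral head normal forms of size `n`. -/
noncomputable def K (n : ℕ) : ℕ := Nat.card {t : Term // IsNeutralHnf t ∧ t.size = n}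

/-- Head normal forms: terms of the form `abs (abs … (abs K) …)` (zero or more
abstractions) where `K` is a neutral head normal form. -/
inductive IsHnf : Term → Prop
  | of_neutral {t : Term} : IsNeutralHnf t → IsHnf t
  | abs {t : Term} : IsHnf t → IsHnf (Term.abs t)

/-- `H n` is the number of head normal forms of size `n`. -/
noncomputable def H (n : ℕ) : ℕ := Nat.card {t : Term // IsHnf t ∧ t.size = n}

open Filter Topology Finset

theorem hnf_bender (a : ℕ → ℂ) (x : ℂ) (ha : ∀ n, a n ≠ 0)
    (hlim : Tendsto (fun n => a n / a (n+1)) atTop (𝓝 x)) (C R : ℝ)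
    (hC : ∀ m k, ‖a m‖ ≤ C * R^k * ‖a (m+k)‖) (b : ℕ → ℂ)
    (hb : Summable fun k => ‖b k‖ * R^k) :
    Tendsto (fun n => (∑ p ∈ antidiagonal n, b p.1 * a p.2) / a n) atTop
      (𝓝 (∑' k, b k * x^k)) := by
  have hk : ∀ k, Tendsto (fun n => a n / a (n+k)) atTop (𝓝 (x^k)) := by
    intro k
    induction k with
    | zero => simp [ha]
    | succ k ih =>
      have h2 := hlim.comp (tendsto_add_atTop_nat k)
      rw [pow_succ]
      refine (ih.mul h2).congr fun n => ?_
      have := ha (n+k)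
      have := ha (n+k+1)
      simp only [Function.comp]
      rw [← add_assoc]
      field_simp
  have key : (fun n => (∑ p ∈ antidiagonal n, b p.1 * a p.2) / a n) =
      fun n => ∑' k, if k ≤ n then b k * (a (n-k) / a n) else 0 := by
    funext n
    rw [Finset.Nat.sum_antidiagonal_eq_sum_range_succ (fun i j => b i * a j), Finset.sum_div,
      tsum_eq_sum (s := range (n+1))]
    · refine sum_congr rfl fun k hk => ?_
      rw [if_pos (by simpa [Nat.lt_succ_iff] using hk), mul_div_assoc]
    · intro k hk
      rw [if_neg (by simpa [Nat.lt_succ_iff] using hk)]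
  rw [key]
  refine tendsto_tsum_of_dominated_convergence (bound := fun k => C * (‖b k‖ * R^k)) (hb.mul_left C)
    ?_ ?_
  · intro k
    rw [← tendsto_add_atTop_iff_nat k]
    refine ((hk k).const_mul (b k)).congr fun n => ?_
    simp
  · refine Eventually.of_forall fun n k => ?_
    have hRC : ∀ k, 0 ≤ C * R^k := fun k => by
      have h1 := hC 0 k
      have h2 : 0 < ‖a (0+k)‖ := norm_pos_iff.2 (ha _)
      by_contra hneg
      push Not at hneg
      nlinarith [norm_nonneg (a 0)]
    split_ifs with h
    · rw [norm_mul, norm_div]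
      have h1 := hC (n-k) k
      rw [Nat.sub_add_cancel h] at h1
      have h2 : 0 < ‖a n‖ := norm_pos_iff.2 (ha _)
      have h3 : ‖a (n-k)‖ / ‖a n‖ ≤ C * R^k := by rwa [div_le_iff₀ h2]
      calc _ ≤ ‖b k‖ * (C * R^k) := by gcongr
        _ = _ := by ring
    · have := mul_nonneg (norm_nonneg (b k)) (hRC k)
      simp only [norm_zero]
      linarith

theorem hnf_choose_rec (r : ℂ) (n : ℕ) :
    Ring.choose r (n+1) = Ring.choose r n * (r - n) / (n+1) := by
  have h := Ring.choose_add_smul_choose r 1 n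
  have h0 := Ring.choose_smul_choose r (n := n+1) (k := n) (by omega)
  simp at h0
  rw [eq_div_iff (by exact_mod_cast Nat.succ_ne_zero n)]
  rw [← h0]; ring

theorem hnf_choose_le (r : ℂ) (hr : ‖r‖ ≤ 1) (n : ℕ) : ‖Ring.choose r n‖ ≤ 1 := by
  induction n with
  | zero => simp
  | succ n ih =>
    rw [hnf_choose_rec, norm_div, norm_mul, div_le_one (by rw [norm_pos_iff]; exact_mod_cast Nat.succ_ne_zero n)]
    have h1 : ‖r - n‖ ≤ 1 + n := (norm_sub_le _ _).trans (by simpa using hr)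
    have h2 : ‖(n:ℂ)+1‖ = 1 + n := by
      rw [add_comm]; exact_mod_cast Complex.norm_natCast (1+n)
    rw [h2]
    nlinarith [norm_nonneg (r - (n:ℂ))]

theorem hnf_half_rec (n : ℕ) : ‖Ring.choose (1/2:ℂ) (n+1)‖ =
    ‖Ring.choose (1/2:ℂ) n‖ * (|1/2 - (n:ℝ)| / (n+1)) := by
  rw [hnf_choose_rec, norm_div, norm_mul, mul_div_assoc]
  have h2 : ‖(n:ℂ)+1‖ = n+1 := by exact_mod_cast Complex.norm_natCast (n+1)
  have h3 : ‖(1/2:ℂ) - n‖ = |1/2 - (n:ℝ)| := by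
    rw [← Real.norm_eq_abs, ← Complex.norm_real]; push_cast; rfl
  rw [h2, h3]

theorem hnf_half_pos (n : ℕ) : 0 < ‖Ring.choose (1/2:ℂ) n‖ := by
  induction n with
  | zero => simp
  | succ n ih =>
    rw [hnf_half_rec]
    have : (1/2 - (n:ℝ)) ≠ 0 := by
      intro h
      have : (1:ℝ) = ((2*n : ℕ):ℝ) := by push_cast; linarith
      norm_cast at this
      omega
    have := abs_pos.2 this
    positivity

theorem hnf_half_mono (m k : ℕ) : ‖Ring.choose (1/2:ℂ) (m+2)‖ * 2^(m+2) ≤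
    ‖Ring.choose (1/2:ℂ) (m+2+k)‖ * 2^(m+2+k) := by
  induction k with
  | zero => simp
  | succ k ih =>
    refine ih.trans ?_
    rw [← add_assoc, hnf_half_rec, pow_succ (2:ℝ) (m+2+k)]
    have h : (1/2:ℝ) ≤ |1/2 - ((m+2+k : ℕ):ℝ)| / ((m+2+k : ℕ) + 1) := by
      rw [le_div_iff₀ (by positivity)]
      have := neg_le_abs (1/2 - ((m+2+k : ℕ):ℝ))
      push_cast at *
      have h1 : (0:ℝ) ≤ m := by positivity
      have h2 : (0:ℝ) ≤ k := by positivity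
      linarith
    have h0 := hnf_half_pos (m+2+k)
    have h4 : (0:ℝ) < ‖Ring.choose (1/2:ℂ) (m+2+k)‖ * 2^(m+2+k) := by positivity
    nlinarith

theorem hnf_half_two : ‖Ring.choose (1/2:ℂ) 1‖ = 1/2 ∧ ‖Ring.choose (1/2:ℂ) 2‖ = 1/8 := by
  have h1 : ‖Ring.choose (1/2:ℂ) 1‖ = 1/2 := by simp
  refine ⟨h1, ?_⟩
  have := hnf_half_rec 1
  rw [h1] at this
  rw [this]
  norm_num

theorem hnf_half_lower (n : ℕ) : 1/2 ≤ ‖Ring.choose (1/2:ℂ) n‖ * 2^n := by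
  obtain ⟨h1, h2⟩ := hnf_half_two
  match n with
  | 0 => simp; norm_num
  | 1 => rw [h1]; norm_num
  | n+2 =>
    have := hnf_half_mono 0 n
    simp only [zero_add] at this
    rw [h2] at this
    rw [add_comm n 2]
    linarith

theorem hnf_half_quasi (m k : ℕ) : ‖Ring.choose (1/2:ℂ) m‖ * 2^m ≤
    2 * (‖Ring.choose (1/2:ℂ) (m+k)‖ * 2^(m+k)) := by
  have hl := hnf_half_lower (m+k)
  obtain ⟨h1, h2⟩ := hnf_half_two
  match m with
  | 0 => simp at hl ⊢; linarith
  | 1 => rw [h1]; linarith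
  | m+2 => have := hnf_half_mono m k; linarith

theorem hnf_half_ratio : Tendsto (fun n => Ring.choose (1/2:ℂ) n / Ring.choose (1/2:ℂ) (n+1))
    atTop (𝓝 (-1)) := by
  have h0 : Tendsto (fun n : ℕ => (1:ℂ)/n) atTop (𝓝 0) := tendsto_one_div_atTop_nhds_zero_nat
  have : Tendsto (fun n : ℕ => (1 + (1:ℂ)/n) / ((1/2) * (1/n) - 1)) atTop
      (𝓝 ((1+0)/((1/2)*0-1))) := by
    refine (h0.const_add 1).div ((h0.const_mul _).sub_const 1) (by norm_num)
  have e : ((1+0)/((1/2)*0-1) : ℂ) = -1 := by norm_num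
  rw [e] at this
  refine this.congr' ?_
  filter_upwards [eventually_gt_atTop 0] with n hn
  have hn' : (n:ℂ) ≠ 0 := by exact_mod_cast hn.ne'
  have hc := norm_pos_iff.1 (hnf_half_pos n)
  have hc' := norm_pos_iff.1 (hnf_half_pos (n+1))
  have hr := hnf_choose_rec (1/2) n
  have hn1 : (n:ℂ)+1 ≠ 0 := by exact_mod_cast Nat.succ_ne_zero n
  have hd : (1/2:ℂ) - n ≠ 0 := by
    intro h; rw [h] at hr; simp at hr; exact hc' (by simpa using hr)
  rw [hr]
  have e1 : (1/2:ℂ)*(1/n) - 1 = (1/2 - n)/n := by field_simp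
  rw [e1]
  generalize (1/2:ℂ) - n = d at *
  field_simp
  try ring

theorem hnf_summ_mul (R : ℝ) (hR : 0 ≤ R) (f g : PowerSeries ℂ)
    (hf : Summable fun k => ‖PowerSeries.coeff k f‖ * R^k)
    (hg : Summable fun k => ‖PowerSeries.coeff k g‖ * R^k) :
    Summable fun k => ‖PowerSeries.coeff k (f*g)‖ * R^k := by
  have e : ∀ h : PowerSeries ℂ, (fun k => ‖PowerSeries.coeff k h‖ * R^k) =
      fun k => ‖PowerSeries.coeff k h * (R:ℂ)^k‖ := by
    intro h; funext k; simp [abs_of_nonneg hR]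
  rw [e] at *
  refine (summable_norm_sum_mul_antidiagonal_of_summable_norm hf hg).congr fun n => ?_
  rw [PowerSeries.coeff_mul, Finset.sum_mul]
  congr 1
  refine Finset.sum_congr rfl fun p hp => ?_
  rw [← mem_antidiagonal.1 hp, pow_add]; ring

theorem hnf_summ_lt (R x : ℝ) (hx : 0 ≤ x) (hxR : x ≤ R) (f : PowerSeries ℂ)
    (hf : Summable fun k => ‖PowerSeries.coeff k f‖ * R^k) :
    Summable fun k => ‖PowerSeries.coeff k f * (x:ℂ)^k‖ := by
  refine Summable.of_nonneg_of_le (fun _ => norm_nonneg _) (fun k => ?_) hf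
  rw [norm_mul, norm_pow, Complex.norm_real, Real.norm_eq_abs, abs_of_nonneg hx]
  gcongr

theorem hnf_ev_mul (R x : ℝ) (hx : 0 ≤ x) (hxR : x ≤ R) (f g : PowerSeries ℂ)
    (hf : Summable fun k => ‖PowerSeries.coeff k f‖ * R^k)
    (hg : Summable fun k => ‖PowerSeries.coeff k g‖ * R^k) :
    ∑' k, PowerSeries.coeff k (f*g) * (x:ℂ)^k =
      (∑' k, PowerSeries.coeff k f * (x:ℂ)^k) * ∑' k, PowerSeries.coeff k g * (x:ℂ)^k := by
  rw [tsum_mul_tsum_eq_tsum_sum_antidiagonal_of_summable_norm (hnf_summ_lt R x hx hxR f hf)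
    (hnf_summ_lt R x hx hxR g hg)]
  refine tsum_congr fun n => ?_
  rw [PowerSeries.coeff_mul, Finset.sum_mul]
  refine Finset.sum_congr rfl fun p hp => ?_
  rw [← mem_antidiagonal.1 hp, pow_add]; ring

theorem hnf_coeff_lin (c : ℂ) (k : ℕ) (hk : 2 ≤ k) :
    PowerSeries.coeff k (1 + PowerSeries.C c * PowerSeries.X : PowerSeries ℂ) = 0 := by
  simp only [map_add, PowerSeries.coeff_C_mul, PowerSeries.coeff_X, PowerSeries.coeff_one]
  rw [if_neg (by omega), if_neg (by omega)]; simp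

theorem hnf_summ_lin (R : ℝ) (c : ℂ) : Summable fun k =>
    ‖PowerSeries.coeff k (1 + PowerSeries.C c * PowerSeries.X : PowerSeries ℂ)‖ * R^k := by
  refine summable_of_ne_finset_zero (s := range 2) fun k hk => ?_
  rw [hnf_coeff_lin c k (by rw [mem_range] at hk; omega)]; simp

theorem hnf_ev_lin (x : ℝ) (c : ℂ) : ∑' k,
    PowerSeries.coeff k (1 + PowerSeries.C c * PowerSeries.X : PowerSeries ℂ) * (x:ℂ)^k
      = 1 + c * x := by
  rw [tsum_eq_sum (s := range 2)]
  · simp [sum_range_succ, PowerSeries.coeff_X, PowerSeries.coeff_one]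
  · intro k hk
    rw [hnf_coeff_lin c k (by rw [mem_range] at hk; omega)]; simp

/-- The power series of `(1 + c X) ^ r`. -/
noncomputable def hnfB (c r : ℂ) : PowerSeries ℂ :=
  PowerSeries.rescale c (PowerSeries.binomialSeries ℂ r)

theorem hnfB_coeff (c r : ℂ) (n : ℕ) :
    PowerSeries.coeff n (hnfB c r) = c^n * Ring.choose r n := by
  simp [hnfB, PowerSeries.coeff_rescale]

theorem hnfB_half (c : ℂ) : hnfB c (1/2) * hnfB c (1/2) = 1 + PowerSeries.C c * PowerSeries.X := by
  rw [hnfB, ← map_mul, ← PowerSeries.binomialSeries_add]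
  have : (1/2 + 1/2 : ℂ) = ((1:ℕ):ℂ) := by norm_num
  rw [this, PowerSeries.binomialSeries_nat]
  simp [PowerSeries.rescale_X]

theorem hnfB_neg (c r : ℂ) : hnfB c r * hnfB c (-r) = 1 := by
  rw [hnfB, hnfB, ← map_mul, ← PowerSeries.binomialSeries_add]
  simp

theorem hnfB_summ (R : ℝ) (hR : 0 ≤ R) (c r : ℂ) (hr : ‖r‖ ≤ 1) (hc : ‖c‖ * R < 1) :
    Summable fun k => ‖PowerSeries.coeff k (hnfB c r)‖ * R^k := by
  refine Summable.of_nonneg_of_le (fun _ => by positivity) (fun k => ?_)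
    (summable_geometric_of_lt_one (by positivity) hc)
  rw [hnfB_coeff, norm_mul, norm_pow, mul_pow]
  have := hnf_choose_le r hr k
  calc _ ≤ ‖c‖^k * 1 * R^k := by gcongr
    _ = _ := by ring

/-- The analytic core. -/
theorem hnf_core (ρ : ℝ) (h0 : 0 < ρ) (h1 : ρ < 1) (hroot : ρ ^ 3 + ρ ^ 2 + 3 * ρ - 1 = 0)
    (S J : PowerSeries ℂ)
    (hJ : J * (1 - PowerSeries.X) = 1)
    (hS0 : PowerSeries.constantCoeff S = 1)
    (hS : S^2 * (1 - PowerSeries.X) = (1 - PowerSeries.X)^3 - 4 * PowerSeries.X^2) :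
    ∃ (a : ℕ → ℂ) (w : ℂ), w ≠ 0 ∧ (∀ n, a n ≠ 0) ∧
      Tendsto (fun n => a n / a (n+1)) atTop (𝓝 (ρ:ℂ)) ∧
      Tendsto (fun n => 1 / a n) atTop (𝓝 0) ∧
      Tendsto (fun n => PowerSeries.coeff n S / a n) atTop (𝓝 w) ∧
      Tendsto (fun n => PowerSeries.coeff n (S * J) / a n) atTop (𝓝 (w / (1 - ρ))) := by
  have h3 : ρ < 1/3 := by nlinarith [sq_nonneg ρ, pow_pos h0 3]
  have hρ : (ρ:ℂ) ≠ 0 := by exact_mod_cast h0.ne'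
  have hrootC : (ρ:ℂ) ^ 3 + ρ ^ 2 + 3 * ρ - 1 = 0 := by exact_mod_cast congrArg Complex.ofReal hroot
  -- complex factors
  obtain ⟨β, hβ⟩ : ∃ β : ℂ, 1 * (β * β) + (-(ρ*(1+ρ))) * β + ρ = 0 := by
    refine exists_quadratic_eq_zero one_ne_zero ?_
    obtain ⟨s, hs⟩ := IsAlgClosed.exists_pow_nat_eq (discrim (1:ℂ) (-(ρ*(1+ρ))) ρ) (n := 2) two_pos
    exact ⟨s, by rw [← hs, sq]⟩
  have nb : ∀ z : ℂ, 1 * (z * z) + (-(ρ*(1+ρ))) * z + ρ = 0 → ‖z‖ ≤ 1 := by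
    intro z hz
    by_contra hlt
    push Not at hlt
    have e : z * z = (ρ*(1+ρ):ℝ) * z + (-ρ:ℝ) := by push_cast; linear_combination hz
    have h := norm_add_le (((ρ*(1+ρ):ℝ):ℂ) * z) ((-ρ:ℝ):ℂ)
    rw [← e, norm_mul, norm_mul, Complex.norm_real, Complex.norm_real, Real.norm_eq_abs,
      Real.norm_eq_abs, abs_neg, abs_of_pos h0, abs_of_pos (by positivity)] at h
    have h5 : ρ * (1 + ρ) ≤ 1/2 := by nlinarith
    nlinarith
  set γ : ℂ := ρ*(1+ρ) - β with hγdef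
  have hγ : 1 * (γ * γ) + (-(ρ*(1+ρ))) * γ + ρ = 0 := by rw [hγdef]; linear_combination hβ
  have hβγ : β * γ = ρ := by rw [hγdef]; linear_combination -hβ
  have hβn := nb β hβ
  have hγn := nb γ hγ
  set R : ℝ := 2 * ρ with hR
  have hR0 : 0 ≤ R := by positivity
  have hRlt : R < 1 := by linarith
  have hxR : ρ ≤ R := by linarith
  have half1 : ‖(1/2:ℂ)‖ ≤ 1 := by norm_num
  have half2 : ‖(-(1/2):ℂ)‖ ≤ 1 := by norm_num
  have sβ := hnfB_summ R hR0 β (1/2) half1 (by nlinarith)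
  have sγ := hnfB_summ R hR0 γ (1/2) half1 (by nlinarith)
  have s1 := hnfB_summ R hR0 (-1) (-(1/2)) half2 (by simpa using hRlt)
  set g : PowerSeries ℂ := hnfB β (1/2) * hnfB γ (1/2) * hnfB (-1) (-(1/2)) with hg
  have sg : Summable fun k => ‖PowerSeries.coeff k g‖ * R^k :=
    hnf_summ_mul R hR0 _ _ (hnf_summ_mul R hR0 _ _ sβ sγ) s1
  have lin1 : (1 - PowerSeries.X : PowerSeries ℂ) = 1 + PowerSeries.C (-1) * PowerSeries.X := by
    simp; ring
  have hgg : g * g * (1 + PowerSeries.C (-1) * PowerSeries.X) =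
      (1 + PowerSeries.C β * PowerSeries.X) * (1 + PowerSeries.C γ * PowerSeries.X) := by
    rw [← hnfB_half, ← hnfB_half β, ← hnfB_half γ, hg]
    have := hnfB_neg (-1) (1/2)
    calc _ = hnfB β (1/2) * hnfB β (1/2) * (hnfB γ (1/2) * hnfB γ (1/2)) *
        (hnfB (-1) (1/2) * hnfB (-1) (-(1/2)))^2 := by ring
      _ = _ := by rw [this]; ring
  set w := ∑' k, PowerSeries.coeff k g * (ρ:ℂ)^k with hw
  have hww : w * w * (1 + (-1) * ρ) = (1 + β * ρ) * (1 + γ * ρ) := by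
    rw [hw, ← hnf_ev_mul R ρ h0.le hxR g g sg sg, ← hnf_ev_lin ρ (-1), ← hnf_ev_lin ρ β,
      ← hnf_ev_lin ρ γ, ← hnf_ev_mul R ρ h0.le hxR _ _ (hnf_summ_mul R hR0 _ _ sg sg)
      (hnf_summ_lin R _), ← hnf_ev_mul R ρ h0.le hxR _ _ (hnf_summ_lin R _)
      (hnf_summ_lin R _), hgg]
  have hw0 : w ≠ 0 := by
    intro h
    rw [h] at hww
    have e : ((1 + ρ*(1+ρ)*ρ + ρ*ρ^2 : ℝ) : ℂ) = 0 := by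
      push_cast
      have e1 : β + γ = ρ*(1+ρ) := by rw [hγdef]; ring
      linear_combination -hww - (ρ:ℂ) * e1 - (ρ:ℂ)^2 * hβγ
    have e' : (1 + ρ*(1+ρ)*ρ + ρ*ρ^2 : ℝ) = 0 := by exact_mod_cast e
    have : 0 < (1 + ρ*(1+ρ)*ρ + ρ*ρ^2 : ℝ) := by positivity
    linarith
  -- J
  have hJc : J = hnfB (-1) (-(1/2)) * hnfB (-1) (-(1/2)) := by
    have h := hnfB_neg (-1) (1/2)
    have h' := hnfB_half (-1)
    rw [lin1, ← h'] at hJ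
    calc J = J * (hnfB (-1) (1/2) * hnfB (-1) (-(1/2)))^2 := by rw [h]; ring
      _ = (J * (hnfB (-1) (1/2) * hnfB (-1) (1/2))) * (hnfB (-1) (-(1/2)) * hnfB (-1) (-(1/2))) := by
        ring
      _ = _ := by rw [hJ, one_mul]
  have sJ : Summable fun k => ‖PowerSeries.coeff k J‖ * R^k := by
    rw [hJc]; exact hnf_summ_mul R hR0 _ _ s1 s1
  have hJev : (∑' k, PowerSeries.coeff k J * (ρ:ℂ)^k) * (1 + (-1) * ρ) = 1 := by
    rw [← hnf_ev_lin ρ (-1), ← hnf_ev_mul R ρ h0.le hxR _ _ sJ (hnf_summ_lin R _), ← lin1, hJ]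
    simp
  -- S = A * g
  set A := hnfB (-(1/ρ)) (1/2) with hA
  have hSA : S = g * A := by
    have hX : (1 - PowerSeries.X : PowerSeries ℂ) ≠ 0 := by
      intro h; rw [h] at hJ; simp at hJ
    have hsq : S^2 = (g*A)^2 := by
      apply mul_right_cancel₀ hX
      rw [hS]
      have hAA := hnfB_half (-(1/(ρ:ℂ)))
      rw [← hA] at hAA
      have : (g*A)^2 * (1 - PowerSeries.X) = (g * g * (1 + PowerSeries.C (-1) * PowerSeries.X)) * (A*A) := by
        rw [lin1]; ring
      rw [this, hgg, hAA]
      have c1 : (PowerSeries.C β + PowerSeries.C γ + PowerSeries.C (-(1/(ρ:ℂ))) : PowerSeries ℂ) = -3 := by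
        have : β + γ + (-(1/(ρ:ℂ))) = -3 := by
          rw [hγdef]; field_simp; linear_combination hrootC
        rw [← map_add, ← map_add, this, map_neg]; rfl
      have c2 : (PowerSeries.C β * PowerSeries.C γ + (PowerSeries.C β + PowerSeries.C γ) * PowerSeries.C (-(1/(ρ:ℂ))) : PowerSeries ℂ) = -1 := by
        have : β * γ + (β + γ) * (-(1/(ρ:ℂ))) = -1 := by
          rw [hβγ, hγdef]; field_simp; ring
        rw [← map_add, ← map_mul, ← map_mul, ← map_add, this]; simp
      have c3 : (PowerSeries.C β * PowerSeries.C γ * PowerSeries.C (-(1/(ρ:ℂ))) : PowerSeries ℂ) = -1 := by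
        have : β * γ * (-(1/(ρ:ℂ))) = -1 := by
          rw [hβγ]; field_simp
        rw [← map_mul, ← map_mul, this]; simp
      linear_combination (-PowerSeries.X) * c1 - PowerSeries.X^2 * c2 - PowerSeries.X^3 * c3
    rcases sq_eq_sq_iff_eq_or_eq_neg.1 hsq with h | h
    · exact h
    · exfalso
      have : PowerSeries.constantCoeff (g*A) = 1 := by
        have hb : ∀ c r : ℂ, PowerSeries.constantCoeff (hnfB c r) = 1 := fun c r => by
          rw [← PowerSeries.coeff_zero_eq_constantCoeff_apply, hnfB_coeff]; simp
        rw [hg, hA]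
        simp only [map_mul, hb, mul_one]
      rw [h, map_neg, this] at hS0
      norm_num at hS0
  have aeq : ∀ n, PowerSeries.coeff n A = (-(1/ρ:ℂ))^n * Ring.choose (1/2) n := fun n => hnfB_coeff _ _ n
  have an0 : ∀ n, PowerSeries.coeff n A ≠ 0 := fun n => by
    rw [aeq]; exact mul_ne_zero (pow_ne_zero _ (by simpa using hρ)) (norm_pos_iff.1 (hnf_half_pos n))
  have anorm : ∀ n, ‖PowerSeries.coeff n A‖ = (1/ρ)^n * ‖Ring.choose (1/2:ℂ) n‖ := fun n => by
    rw [aeq, norm_mul, norm_pow, norm_neg]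
    congr 2
    simp [abs_of_pos h0]
  have alim : Tendsto (fun n => PowerSeries.coeff n A / PowerSeries.coeff (n+1) A) atTop (𝓝 (ρ:ℂ)) := by
    have := hnf_half_ratio.const_mul (-(ρ:ℂ))
    rw [show -(ρ:ℂ) * (-1) = ρ by ring] at this
    refine this.congr fun n => ?_
    rw [aeq, aeq, pow_succ]
    have := norm_pos_iff.1 (hnf_half_pos (n+1))
    have : (-(1/(ρ:ℂ)))^n ≠ 0 := pow_ne_zero _ (by simpa using hρ)
    generalize (-(1/(ρ:ℂ)))^n = q at *
    field_simp
  have hC : ∀ m k, ‖PowerSeries.coeff m A‖ ≤ 2 * R^k * ‖PowerSeries.coeff (m+k) A‖ := by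
    intro m k
    rw [anorm, anorm, hR]
    have hq := hnf_half_quasi m k
    have e1 : 2 * (2*ρ)^k * ((1/ρ)^(m+k) * ‖Ring.choose (1/2:ℂ) (m+k)‖) =
      (1/ρ)^m * (2 * (2^k * ‖Ring.choose (1/2:ℂ) (m+k)‖)) * (ρ * (1/ρ))^k := by
      rw [pow_add, mul_pow, mul_pow]; ring
    rw [e1, mul_one_div_cancel h0.ne', one_pow, mul_one]
    gcongr
    have h2 : (0:ℝ) < 2^m := by positivity
    rw [pow_add] at hq
    refine le_of_mul_le_mul_right ?_ h2
    linarith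
  have bend := fun b : PowerSeries ℂ => fun hb => hnf_bender (fun n => PowerSeries.coeff n A) ρ an0 alim 2 R hC
    (fun n => PowerSeries.coeff n b) hb
  refine ⟨fun n => PowerSeries.coeff n A, w, hw0, an0, alim, ?_, ?_, ?_⟩
  · rw [tendsto_zero_iff_norm_tendsto_zero]
    have hgeo : Tendsto (fun n : ℕ => 2 * R^n) atTop (𝓝 0) := by
      simpa using (tendsto_pow_atTop_nhds_zero_of_lt_one hR0 hRlt).const_mul 2
    refine squeeze_zero (fun _ => norm_nonneg _) (fun n => ?_) hgeo
    have hc := hC 0 n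
    rw [zero_add] at hc
    have : ‖PowerSeries.coeff 0 A‖ = 1 := by rw [anorm]; simp
    rw [this] at hc
    rw [norm_div, norm_one, div_le_iff₀ (norm_pos_iff.2 (an0 n))]
    exact hc
  · refine (bend g sg).congr fun n => ?_
    rw [hSA, PowerSeries.coeff_mul]
  · have hb := bend (g*J) (hnf_summ_mul R hR0 _ _ sg sJ)
    rw [hnf_ev_mul R ρ h0.le hxR _ _ sg sJ, ← hw] at hb
    have hd : (1 - (ρ:ℂ)) ≠ 0 := by
      have : (1-ρ) ≠ 0 := by linarith
      exact_mod_cast this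
    have e : w * (∑' k, PowerSeries.coeff k J * (ρ:ℂ)^k) = w / (1 - ρ) := by
      rw [eq_div_iff hd]; linear_combination w * hJev
    rw [e] at hb
    refine hb.congr fun n => ?_
    rw [hSA, show g * A * J = g * J * A by ring, PowerSeries.coeff_mul]

theorem hnf_finite_size (n : ℕ) : {t : Term | t.size = n}.Finite := by
  induction n using Nat.strong_induction_on with
  | _ n ih =>
    have hf : (⋃ i ∈ Set.Iio n, {t : Term | t.size = i}).Finite :=
      (Set.finite_Iio n).biUnion fun i hi => ih i hi
    refine ((Set.finite_singleton (Term.var (n-1))).union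
      ((hf.image Term.abs).union (hf.image2 Term.app hf))).subset ?_
    rintro t ht
    simp only [Set.mem_ofPred_eq] at ht
    cases t with
    | var k => left; simp [Term.size] at ht; simp; omega
    | app M N =>
      right; right
      simp [Term.size] at ht
      exact ⟨M, by simp; omega, N, by simp; omega, rfl⟩
    | abs M =>
      right; left
      simp [Term.size] at ht
      exact ⟨M, by simp; omega, rfl⟩

/-- Number of terms of size `n` satisfying `P`. -/
noncomputable def hnfCount (P : Term → Prop) (n : ℕ) : ℕ := {t : Term | P t ∧ t.size = n}.ncard

theorem hnf_count_finite (P : Term → Prop) (n : ℕ) : {t : Term | P t ∧ t.size = n}.Finite :=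
  (hnf_finite_size n).subset fun _ h => h.2

theorem hnf_count_zero (P : Term → Prop) : hnfCount P 0 = 0 := by
  have : {t : Term | P t ∧ t.size = 0} = ∅ := by
    ext t; cases t <;> simp [Term.size]
  rw [hnfCount, this, Set.ncard_empty]

theorem hnf_count_var (n : ℕ) : hnfCount (fun t => ∃ k, t = Term.var k) (n+1) = 1 := by
  have : {t : Term | (∃ k, t = Term.var k) ∧ t.size = n+1} = {Term.var n} := by
    ext t; constructor
    · rintro ⟨⟨k, rfl⟩, h⟩
      simp [Term.size] at h; simp [h]
    · rintro rfl; exact ⟨⟨n, rfl⟩, rfl⟩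
  rw [hnfCount, this, Set.ncard_singleton]

theorem hnf_count_abs (P : Term → Prop) (n : ℕ) :
    hnfCount (fun t => ∃ m, P m ∧ t = Term.abs m) (n+1) = hnfCount P n := by
  have : {t : Term | (∃ m, P m ∧ t = Term.abs m) ∧ t.size = n+1} =
      Term.abs '' {t : Term | P t ∧ t.size = n} := by
    ext t; constructor
    · rintro ⟨⟨m, hm, rfl⟩, h⟩
      exact ⟨m, ⟨hm, by simpa [Term.size] using h⟩, rfl⟩
    · rintro ⟨m, ⟨hm, h⟩, rfl⟩; exact ⟨⟨m, hm, rfl⟩, by simp [Term.size, h]⟩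
  rw [hnfCount, this, Set.ncard_image_of_injective _ (fun a b h => by simpa using h), hnfCount]

theorem hnf_count_app (P Q : Term → Prop) (n : ℕ) :
    hnfCount (fun t => ∃ m k, P m ∧ Q k ∧ t = Term.app m k) (n+1) =
      ∑ p ∈ antidiagonal n, hnfCount P p.1 * hnfCount Q p.2 := by
  classical
  have e : {t : Term | (∃ m k, P m ∧ Q k ∧ t = Term.app m k) ∧ t.size = n+1} =
      (((antidiagonal n).biUnion fun p => ((hnf_count_finite P p.1).toFinset ×ˢ
        (hnf_count_finite Q p.2).toFinset).image fun x => Term.app x.1 x.2 : Finset Term) : Set Term) := by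
    ext t
    simp only [Set.mem_ofPred_eq, coe_biUnion, coe_image, Set.mem_iUnion, Set.mem_image,
      mem_coe, mem_product, Set.Finite.mem_toFinset, HasAntidiagonal.mem_antidiagonal]
    constructor
    · rintro ⟨⟨m, k, hm, hk, rfl⟩, h⟩
      exact ⟨(m.size, k.size), by simpa [Term.size] using h, (m, k), ⟨⟨hm, rfl⟩, ⟨hk, rfl⟩⟩, rfl⟩
    · rintro ⟨p, hp, x, ⟨⟨h1, h2⟩, ⟨h3, h4⟩⟩, rfl⟩
      exact ⟨⟨_, _, h1, h3, rfl⟩, by simp [Term.size, h2, h4, hp]⟩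
  rw [hnfCount, e, Set.ncard_coe_finset, card_biUnion]
  · refine sum_congr rfl fun p _ => ?_
    rw [card_image_of_injective, card_product, hnfCount, hnfCount,
      Set.ncard_eq_toFinset_card _ (hnf_count_finite P p.1),
      Set.ncard_eq_toFinset_card _ (hnf_count_finite Q p.2)]
    rintro ⟨a, b⟩ ⟨c, d⟩ h
    simpa using h
  · intro p _ q _ hpq
    rw [Function.onFun, Finset.disjoint_left] 
    intro t ht ht'
    simp only [mem_image, mem_product, Set.Finite.mem_toFinset, Set.mem_ofPred_eq] at ht ht'
    obtain ⟨x, ⟨⟨_, h1⟩, ⟨_, h2⟩⟩, rfl⟩ := ht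
    obtain ⟨y, ⟨⟨_, h3⟩, ⟨_, h4⟩⟩, h⟩ := ht'
    simp only [Term.app.injEq] at h
    rw [h.1] at h3
    rw [h.2] at h4
    exact hpq (Prod.ext (h1.symm.trans h3) (h2.symm.trans h4))

theorem hnf_count_or (P Q : Term → Prop) (h : ∀ t, P t → Q t → False) (n : ℕ) :
    hnfCount (fun t => P t ∨ Q t) n = hnfCount P n + hnfCount Q n := by
  have : {t : Term | (P t ∨ Q t) ∧ t.size = n} =
      {t : Term | P t ∧ t.size = n} ∪ {t : Term | Q t ∧ t.size = n} := by
    ext t; simp only [Set.mem_ofPred_eq, Set.mem_union]; tauto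
  rw [hnfCount, this, Set.ncard_union_eq _ (hnf_count_finite P n) (hnf_count_finite Q n)]
  · rfl
  · rw [Set.disjoint_left]; exact fun t h1 h2 => h t h1.1 h2.1

theorem hnf_L_eq (n : ℕ) : L n = hnfCount (fun _ => True) n := by
  simp only [L, hnfCount, true_and, ← Nat.card_coe_set_eq]; rfl

theorem hnf_K_eq (n : ℕ) : K n = hnfCount IsNeutralHnf n := by
  rw [K, hnfCount, ← Nat.card_coe_set_eq]; rfl

theorem hnf_H_eq (n : ℕ) : H n = hnfCount IsHnf n := by
  rw [H, hnfCount, ← Nat.card_coe_set_eq]; rfl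

theorem hnf_L_succ (n : ℕ) : L (n+1) = 1 + L n + ∑ p ∈ antidiagonal n, L p.1 * L p.2 := by
  simp only [hnf_L_eq]
  have h1 := hnf_count_app (fun _ => True) (fun _ => True) n
  have h2 := hnf_count_abs (fun _ => True) n
  have h3 := hnf_count_var n
  rw [← h1, ← h2]
  refine Eq.trans ?_ (congrArg (fun x => x + _ + _) h3)
  rw [← hnf_count_or, ← hnf_count_or]
  · congr 1; funext t
    cases t <;> simp
  · rintro t (⟨k, rfl⟩ | ⟨m, _, rfl⟩) ⟨a, b, _, _, h⟩ <;> cases h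
  · rintro t ⟨k, rfl⟩ ⟨m, _, h⟩; cases h

theorem hnf_K_succ (n : ℕ) : K (n+1) = 1 + ∑ p ∈ antidiagonal n, K p.1 * L p.2 := by
  simp only [hnf_L_eq, hnf_K_eq]
  have h1 := hnf_count_app IsNeutralHnf (fun _ => True) n
  have h3 := hnf_count_var n
  rw [← h1]
  refine Eq.trans ?_ (congrArg (fun x => x + _) h3)
  rw [← hnf_count_or]
  · congr 1; funext t
    apply propext
    constructor
    · intro h
      cases h with
      | var k => exact Or.inl ⟨k, rfl⟩
      | app n h => exact Or.inr ⟨_, _, h, trivial, rfl⟩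
    · rintro (⟨k, rfl⟩ | ⟨a, b, h, _, rfl⟩)
      · exact .var k
      · exact .app b h
  · rintro t ⟨k, rfl⟩ ⟨a, b, _, _, h⟩; cases h

theorem hnf_H_succ (n : ℕ) : H (n+1) = K (n+1) + H n := by
  simp only [hnf_H_eq, hnf_K_eq]
  have h2 := hnf_count_abs IsHnf n
  rw [← h2, ← hnf_count_or]
  · congr 1; funext t
    apply propext
    constructor
    · intro h
      cases h with
      | of_neutral h => exact Or.inl h
      | abs h => exact Or.inr ⟨_, h, rfl⟩
    · rintro (h | ⟨a, h, rfl⟩)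
      · exact .of_neutral h
      · exact .abs h
  · rintro t h ⟨a, _, rfl⟩; cases h

theorem hnf_series : ∃ S J : PowerSeries ℂ, J * (1 - PowerSeries.X) = 1 ∧
    PowerSeries.constantCoeff S = 1 ∧
    S^2 * (1 - PowerSeries.X) = (1 - PowerSeries.X)^3 - 4 * PowerSeries.X^2 ∧
    (∀ n, 1 ≤ n → (L n : ℂ) = -(1/2) * PowerSeries.coeff (n+1) S) ∧
    (∀ n, 1 ≤ n → (H n : ℂ) = -(1/2) * (PowerSeries.coeff n (S * J) - 2)) := by
  set X : PowerSeries ℂ := PowerSeries.X with hX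
  set J : PowerSeries ℂ := PowerSeries.mk 1 with hJd
  have hJ : J * (1 - X) = 1 := PowerSeries.mk_one_mul_one_sub_eq_one ℂ
  set Lp : PowerSeries ℂ := PowerSeries.mk fun n => (L n : ℂ) with hLp
  set Kp : PowerSeries ℂ := PowerSeries.mk fun n => (K n : ℂ) with hKp
  set Hp : PowerSeries ℂ := PowerSeries.mk fun n => (H n : ℂ) with hHp
  have L0 : L 0 = 0 := by rw [hnf_L_eq, hnf_count_zero]
  have K0 : K 0 = 0 := by rw [hnf_K_eq, hnf_count_zero]
  have H0 : H 0 = 0 := by rw [hnf_H_eq, hnf_count_zero]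
  have eL : Lp = X * (J + Lp + Lp * Lp) := by
    ext n
    cases n with
    | zero => simp [hX, hLp, L0]
    | succ n =>
      rw [hX, PowerSeries.coeff_succ_X_mul, map_add, map_add, PowerSeries.coeff_mul]
      simp [hLp, hJd, hnf_L_succ]
  have eK : Kp = X * (J + Kp * Lp) := by
    ext n
    cases n with
    | zero => simp [hX, hKp, K0]
    | succ n =>
      rw [hX, PowerSeries.coeff_succ_X_mul, map_add, PowerSeries.coeff_mul]
      simp [hLp, hKp, hJd, hnf_K_succ]
  have eH : Hp = Kp + X * Hp := by
    ext n
    cases n with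
    | zero => simp [hX, hKp, hHp, K0, H0]
    | succ n =>
      rw [map_add, hX, PowerSeries.coeff_succ_X_mul]
      simp [hKp, hHp, hnf_H_succ]
  have hcX : PowerSeries.constantCoeff X = 0 := by simp [hX]
  have hK : Kp = X + X * Lp := by
    have hne : (1 - X * Lp) ≠ 0 := by
      intro h
      have := congrArg PowerSeries.constantCoeff h
      simp [hcX] at this
    apply mul_right_cancel₀ hne
    linear_combination eK - X * eL + X * hJ
  refine ⟨1 - X - 2 * X * Lp, J, hJ, ?_, ?_, ?_, ?_⟩
  · simp [hcX]
  · linear_combination -4 * X * (1 - X) * eL - 4 * X^2 * hJ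
  · intro n hn
    obtain ⟨m, rfl⟩ := Nat.exists_eq_add_of_le' hn
    rw [map_sub, map_sub, mul_comm 2 X, mul_assoc, hX, PowerSeries.coeff_succ_X_mul,
      PowerSeries.coeff_X, PowerSeries.coeff_one, if_neg (by omega), if_neg (by omega),
      show (2:PowerSeries ℂ) = PowerSeries.C 2 from rfl, PowerSeries.coeff_C_mul]
    simp [hLp]
  · intro n hn
    have e : Hp * 2 = (1 + X) * J - (1 - X - 2 * X * Lp) * J := by
      have : Hp = Kp * J := by linear_combination J * eH - Hp * hJ
      rw [this, hK]; ring
    obtain ⟨m, rfl⟩ := Nat.exists_eq_add_of_le' hn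
    have e2 := congrArg (PowerSeries.coeff (m+1)) e
    rw [map_sub, add_mul, one_mul, map_add, hX, PowerSeries.coeff_succ_X_mul,
      show (2:PowerSeries ℂ) = PowerSeries.C 2 from rfl, PowerSeries.coeff_mul_C] at e2
    simp only [hHp, hJd, PowerSeries.coeff_mk, Pi.one_apply] at e2
    rw [show (2:PowerSeries ℂ) = PowerSeries.C 2 from rfl, hJd]
    linear_combination (1/2) * e2

theorem density_hnf (ρ : ℝ)
    (hρ_mem : ρ ∈ Set.Ioo (0 : ℝ) 1)
    (hρ_root : ρ ^ 3 + ρ ^ 2 + 3 * ρ - 1 = 0) :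
    Filter.Tendsto (fun n : ℕ => (H n : ℝ) / (L n : ℝ)) Filter.atTop
      (nhds (ρ / (1 - ρ))) := by
  obtain ⟨S, J, hJ, hS0, hS, hL, hH⟩ := hnf_series
  obtain ⟨a, w, hw, ha, hr, hi, hs, hu⟩ := hnf_core ρ hρ_mem.1 hρ_mem.2 hρ_root S J hJ hS0 hS
  have h1 : (1 - (ρ:ℂ)) ≠ 0 := by
    have : (1-ρ) ≠ 0 := by linarith [hρ_mem.2]
    exact_mod_cast this
  have hlim := ((hu.sub (hi.const_mul 2)).mul hr).div (hs.comp (tendsto_add_atTop_nat 1)) hw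
  have e : ((w / (1 - (ρ:ℂ)) - 2 * 0) * ρ / w) = ((ρ / (1 - ρ) : ℝ) : ℂ) := by
    push_cast; field_simp; ring
  rw [e] at hlim
  have hC : Tendsto (fun n : ℕ => (((H n : ℝ) / (L n : ℝ) : ℝ) : ℂ)) atTop
      (𝓝 ((ρ / (1 - ρ) : ℝ) : ℂ)) := by
    refine hlim.congr' ?_
    filter_upwards [eventually_ge_atTop 1] with n hn
    push_cast
    rw [hL n hn, hH n hn, mul_div_mul_left _ _ (by norm_num)]
    have := ha n
    have := ha (n+1)
    simp only [Function.comp, Pi.div_apply]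
    by_cases hz : PowerSeries.coeff (n+1) S = 0
    · simp [hz]
    · field_simp
  have := (Complex.continuous_re.tendsto _).comp hC
  simpa only [Function.comp_def, Complex.ofReal_re] using this
end

section
/- For every fixed lambda term M₀, the density among plain lambda terms of terms that do NOT contain M₀ as a subterm is 0: the sequence n ↦ (number of lambda terms t of size n such that M₀ is not a subterm of t) / L n converges to 0 as n → ∞. -/
/-- Direct subterms: `M` is a direct subterm of `abs M`; `M` and `N` are direct
subterms of `app M N`. -/
inductive DirectSubterm : Term → Term → Prop
  | abs (M : Term) : DirectSubterm M (Term.abs M)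
  | appLeft (M N : Term) : DirectSubterm M (Term.app M N)
  | appRight (M N : Term) : DirectSubterm N (Term.app M N)

/-- The subterm relation: reflexive-transitive closure of the direct-subterm relation. -/
def Subterm : Term → Term → Prop := Relation.ReflTransGen DirectSubterm

namespace Dens

def Kids (P : Term → Prop) : Term → Prop
  | .var _ => True
  | .abs M => P M
  | .app M N => P M ∧ P N

abbrev C (P : Term → Prop) (n : ℕ) := {t : Term // P t ∧ t.size = n}
abbrev D (P : Term → Prop) (n : ℕ) := {t : Term // Kids P t ∧ t.size = n}

abbrev R (P : Term → Prop) (n : ℕ) :=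
  Unit ⊕ C P n ⊕ (Σ p : Finset.HasAntidiagonal.antidiagonal n, C P p.1.1 × C P p.1.2)

def toR (P : Term → Prop) (n : ℕ) : D P (n+1) → R P n
  | ⟨.var _, _⟩ => .inl ()
  | ⟨.abs M, h⟩ => .inr (.inl ⟨M, h.1, by have := h.2; simp [Term.size] at this; exact this⟩)
  | ⟨.app M N, h⟩ => .inr (.inr ⟨⟨(M.size, N.size), by
      have := h.2; simp [Term.size] at this; simpa using this⟩, ⟨M, h.1.1, rfl⟩, ⟨N, h.1.2, rfl⟩⟩)

def ofR (P : Term → Prop) (n : ℕ) : R P n → D P (n+1)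
  | .inl _ => ⟨.var n, trivial, rfl⟩
  | .inr (.inl M) => ⟨.abs M.1, M.2.1, by simp [Term.size, M.2.2]⟩
  | .inr (.inr ⟨p, M, N⟩) => ⟨.app M.1 N.1, ⟨M.2.1, N.2.1⟩, by
      have := p.2
      simp only [Finset.HasAntidiagonal.mem_antidiagonal] at this
      simp only [Term.size, M.2.2, N.2.2, this]⟩

def eqv (P : Term → Prop) (n : ℕ) : D P (n+1) ≃ R P n where
  toFun := toR P n
  invFun := ofR P n
  left_inv := by
    rintro ⟨t, h⟩
    cases t with
    | var k =>
      have := h.2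
      simp only [Term.size] at this
      simp only [toR, ofR, Subtype.mk.injEq, Term.var.injEq]; omega
    | abs M => rfl
    | app M N => rfl
  right_inv := by
    rintro (_ | M | ⟨⟨⟨i, j⟩, hp⟩, ⟨M, hM, hi⟩, ⟨N, hN, hj⟩⟩)
    · rfl
    · rfl
    · dsimp only at hi hj
      subst hi hj
      rfl

lemma size_pos (t : Term) : 0 < t.size := by cases t <;> simp [Term.size]

lemma finS (n : ℕ) : Finite {t : Term // t.size = n} := by
  induction n using Nat.strong_induction_on with
  | _ n ih =>
    cases n with
    | zero =>
      have : IsEmpty {t : Term // t.size = 0} := ⟨fun t => by have := size_pos t.1; have := t.2; omega⟩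
      infer_instance
    | succ n =>
      have h : ∀ k < n + 1, Finite (C (fun _ => True) k) := fun k hk => by
        have := ih k hk
        exact Finite.of_injective (β := {t : Term // t.size = k}) (fun t => ⟨t.1, t.2.2⟩)
          (fun a b hab => Subtype.ext (by simpa using hab))
      have h1 := h n (by omega)
      have h2 : ∀ p : Finset.HasAntidiagonal.antidiagonal n,
          Finite (C (fun _ => True) p.1.1 × C (fun _ => True) p.1.2) := fun p => by
        have hp := p.2
        simp only [Finset.HasAntidiagonal.mem_antidiagonal] at hp
        have := h p.1.1 (by omega)
        have := h p.1.2 (by omega)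
        infer_instance
      have h3 : Finite (R (fun _ => True) n) := inferInstance
      have h4 : Finite (D (fun _ => True) (n+1)) := Finite.of_equiv _ (eqv _ n).symm
      refine Finite.of_injective (β := D (fun _ => True) (n+1))
        (fun t => ⟨t.1, ?_, t.2⟩) (fun a b hab => Subtype.ext (by simpa using hab))
      rcases t with ⟨t, _⟩
      cases t <;> simp [Kids]

instance finC (P : Term → Prop) (n : ℕ) : Finite (C P n) := by
  have := finS n
  exact Finite.of_injective (β := {t : Term // t.size = n}) (fun t => ⟨t.1, t.2.2⟩)
          (fun a b hab => Subtype.ext (by simpa using hab))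

lemma card_D (P : Term → Prop) (n : ℕ) : Nat.card (D P (n+1)) =
    1 + Nat.card (C P n) + ∑ p ∈ Finset.HasAntidiagonal.antidiagonal n, Nat.card (C P p.1) * Nat.card (C P p.2) := by
  rw [Nat.card_congr (eqv P n), Nat.card_sum, Nat.card_sum, Nat.card_sigma]
  simp only [Nat.card_prod, Nat.card_unique]
  rw [Finset.sum_coe_sort (Finset.HasAntidiagonal.antidiagonal n)
    (fun p => Nat.card (C P p.1) * Nat.card (C P p.2)), add_assoc]

lemma L_eq (n : ℕ) : L n = Nat.card (C (fun _ => True) n) := by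
  unfold L
  exact Nat.card_congr (Equiv.subtypeEquivRight (by simp))

lemma L_zero : L 0 = 0 := by
  unfold L
  have : IsEmpty {t : Term // t.size = 0} := ⟨fun t => by have := size_pos t.1; have := t.2; omega⟩
  simp

lemma L_succ (n : ℕ) : L (n+1) = 1 + L n + ∑ p ∈ Finset.HasAntidiagonal.antidiagonal n, L p.1 * L p.2 := by
  simp only [L_eq]
  rw [← card_D]
  apply Nat.card_congr (Equiv.subtypeEquivRight _)
  intro t
  cases t <;> simp [Kids]

noncomputable def A (M₀ : Term) (n : ℕ) : ℕ := Nat.card (C (fun t => ¬ Subterm M₀ t) n)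

lemma A_le_L (M₀ : Term) (n : ℕ) : A M₀ n ≤ L n := by
  have := finS n
  unfold A L
  exact Nat.card_le_card_of_injective (fun t => ⟨t.1, t.2.2⟩)
          (fun a b hab => Subtype.ext (by simpa using hab))

lemma sub_size {M N : Term} (h : Subterm M N) : M.size ≤ N.size := by
  unfold Subterm at h
  induction h with
  | refl => exact le_rfl
  | tail _ h ih => cases h <;> simp only [Term.size] at * <;> omega

lemma kids_of {M₀ t : Term} (h : ¬ Subterm M₀ t) : Kids (fun t => ¬ Subterm M₀ t) t := by
  cases t with
  | var => trivial
  | abs M => exact fun h' => h (Relation.ReflTransGen.tail h' (.abs M))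
  | app M N => exact ⟨fun h' => h (Relation.ReflTransGen.tail h' (.appLeft M N)),
      fun h' => h (Relation.ReflTransGen.tail h' (.appRight M N))⟩

lemma kids_self (M₀ : Term) : Kids (fun t => ¬ Subterm M₀ t) M₀ := by
  cases M₀ with
  | var => trivial
  | abs M => exact fun h' => by have := sub_size h'; simp [Term.size] at this
  | app M N => exact ⟨fun h' => by have := sub_size h'; simp only [Term.size] at this; omega,
      fun h' => by have := sub_size h'; simp only [Term.size] at this; omega⟩

lemma A_succ (M₀ : Term) (n : ℕ) : A M₀ (n+1) + (if n + 1 = M₀.size then 1 else 0) ≤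
    1 + A M₀ n + ∑ p ∈ Finset.HasAntidiagonal.antidiagonal n, A M₀ p.1 * A M₀ p.2 := by
  unfold A
  rw [← card_D]
  have hf : Finite (D (fun t => ¬ Subterm M₀ t) (n+1)) := Finite.of_equiv _ (eqv _ n).symm
  split_ifs with h
  · rw [← Finite.card_option]
    refine Nat.card_le_card_of_injective
      (fun o => o.elim ⟨M₀, kids_self M₀, h.symm⟩ (fun t => ⟨t.1, kids_of t.2.1, t.2.2⟩)) ?_
    rintro (_ | a) (_ | b) hab
    · rfl
    · simp at hab
      exact absurd (by rw [← hab]; exact Relation.ReflTransGen.refl) b.2.1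
    · simp at hab
      exact absurd (by rw [hab]; exact Relation.ReflTransGen.refl) a.2.1
    · simp at hab
      rw [Subtype.ext hab]
  · exact Nat.card_le_card_of_injective (fun t => ⟨t.1, kids_of t.2.1, t.2.2⟩)
          (fun a b hab => Subtype.ext (by simpa using hab))

lemma L_pos (n : ℕ) : 0 < L (n+1) := by rw [L_succ]; omega

lemma L_super (i j : ℕ) : L i * L j ≤ L (i + j + 1) := by
  rw [L_succ]
  have := Finset.single_le_sum (f := fun p : ℕ × ℕ => L p.1 * L p.2) (s := Finset.HasAntidiagonal.antidiagonal (i+j))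
    (fun _ _ => Nat.zero_le _) (a := (i, j)) (by simp)
  simp only at this
  omega


lemma conv_le (c : ℕ → ℝ) (hc : ∀ n, 0 ≤ c n) (N : ℕ) :
    ∑ n ∈ Finset.range N, ∑ p ∈ Finset.HasAntidiagonal.antidiagonal n, c p.1 * c p.2 ≤
      (∑ n ∈ Finset.range N, c n)^2 := by
  rw [sq, Finset.sum_mul_sum, ← Finset.sum_product', Finset.sum_sigma']
  have hinj : Set.InjOn (fun x : (Σ _ : ℕ, ℕ × ℕ) => x.2)
      ((Finset.range N).sigma (fun n => Finset.HasAntidiagonal.antidiagonal n)) := by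
    rintro ⟨a, p⟩ ha ⟨b, q⟩ hb h
    simp at ha hb h
    subst h
    obtain rfl : a = b := by omega
    rfl
  rw [← Finset.sum_image (f := fun p : ℕ × ℕ => c p.1 * c p.2) hinj]
  apply Finset.sum_le_sum_of_subset_of_nonneg
  · intro p hp
    simp at hp ⊢
    omega
  · intros; exact mul_nonneg (hc _) (hc _)

lemma conv_z (a : ℕ → ℝ) (z : ℝ) (n : ℕ) :
    (∑ p ∈ Finset.HasAntidiagonal.antidiagonal n, a p.1 * a p.2) * z ^ n =
     ∑ p ∈ Finset.HasAntidiagonal.antidiagonal n, (a p.1 * z ^ p.1) * (a p.2 * z ^ p.2) := by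
  rw [Finset.sum_mul]
  refine Finset.sum_congr rfl fun p hp => ?_
  rw [← Finset.HasAntidiagonal.mem_antidiagonal.1 hp, pow_add]; ring

lemma step (a e : ℕ → ℝ) (ha : ∀ n, 0 ≤ a n) (h0 : a 0 = 0)
    (hs : ∀ n, a (n+1) + e (n+1) ≤ 1 + a n + ∑ p ∈ Finset.HasAntidiagonal.antidiagonal n, a p.1 * a p.2)
    (z : ℝ) (hz : 0 < z) (hz1 : z < 1) (N : ℕ) :
    ∑ n ∈ Finset.range (N+1), a n * z^n + ∑ n ∈ Finset.range N, e (n+1) * z^(n+1) ≤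
      z / (1-z) + z * ∑ n ∈ Finset.range N, a n * z^n + z * (∑ n ∈ Finset.range N, a n * z^n)^2 := by
  have hc := conv_le (fun n => a n * z^n) (fun n => mul_nonneg (ha n) (by positivity)) N
  have hg : ∑ n ∈ Finset.range N, z^n ≤ 1 / (1-z) := by
    rw [one_div, ← tsum_geometric_of_lt_one hz.le hz1]
    exact (summable_geometric_of_lt_one hz.le hz1).sum_le_tsum _ (fun _ _ => by positivity)
  rw [Finset.sum_range_succ', h0, zero_mul, add_zero, ← Finset.sum_add_distrib]
  calc _ ≤ ∑ n ∈ Finset.range N, (z * z^n + z * (a n * z^n) +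
          z * ∑ p ∈ Finset.HasAntidiagonal.antidiagonal n, (a p.1 * z ^ p.1) * (a p.2 * z ^ p.2)) := by
        refine Finset.sum_le_sum fun n _ => ?_
        rw [← conv_z]
        have := mul_le_mul_of_nonneg_right (hs n) (show 0 ≤ z^(n+1) by positivity)
        rw [pow_succ] at *
        linarith
    _ = z * ∑ n ∈ Finset.range N, z^n + z * ∑ n ∈ Finset.range N, a n * z^n +
        z * ∑ n ∈ Finset.range N, ∑ p ∈ Finset.HasAntidiagonal.antidiagonal n, (a p.1 * z ^ p.1) * (a p.2 * z ^ p.2) := by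
        simp only [Finset.sum_add_distrib, Finset.mul_sum]
    _ ≤ _ := by
        rw [div_eq_mul_one_div z]
        gcongr

lemma not_summable_aux (a : ℕ → ℝ) (ha : ∀ n, 0 ≤ a n) (h0 : a 0 = 0)
    (hs : ∀ n, a (n+1) = 1 + a n + ∑ p ∈ Finset.HasAntidiagonal.antidiagonal n, a p.1 * a p.2)
    (z : ℝ) (hz : 0 < z) (hz1 : z < 1) (hS : Summable (fun n => a n * z^n)) :
    ∃ S, S = z * (1-z)⁻¹ + z * S + z * (S * S) := by
  have hnn : ∀ n, 0 ≤ a n * z^n := fun n => mul_nonneg (ha n) (pow_nonneg hz.le n)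
  obtain ⟨c, hc⟩ : ∃ c : ℕ → ℝ, c = fun n => a n * z^n := ⟨_, rfl⟩
  have hcn : ∀ n, 0 ≤ c n := by rw [hc]; exact hnn
  rw [← hc] at hS
  have hprod := hS.mul_of_nonneg hS hcn hcn
  have hconvS := summable_sum_mul_antidiagonal_of_summable_mul hprod
  have hconv := hS.tsum_mul_tsum_eq_tsum_sum_antidiagonal hS hprod
  have hgeo := hasSum_geometric_of_lt_one hz.le hz1
  have h2 : HasSum (fun n => (z * z^n + z * c n +
          z * ∑ p ∈ Finset.HasAntidiagonal.antidiagonal n, c p.1 * c p.2))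
          (z * (1-z)⁻¹ + z * (∑' n, c n) + z * ((∑' n, c n) * (∑' n, c n))) := by
    refine ((hgeo.mul_left z).add (hS.hasSum.mul_left z)).add (HasSum.mul_left z ?_)
    rw [hconv]
    exact hconvS.hasSum
  have h1 : ∑' n, c n = ∑' n, (z * z^n + z * c n +
          z * ∑ p ∈ Finset.HasAntidiagonal.antidiagonal n, c p.1 * c p.2) := by
    rw [hS.tsum_eq_zero_add]
    have hc0 : c 0 = 0 := by simp [hc, h0]
    rw [hc0, zero_add]
    refine tsum_congr fun n => ?_
    simp only [hc]
    rw [← conv_z, hs, pow_succ]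
    ring
  refine ⟨∑' n, c n, ?_⟩
  rw [h2.tsum_eq] at h1
  exact h1

lemma not_summable (z : ℝ) (hz : 0 < z) (hz1 : z < 1) (hf : (1-z)^3 < 4*z^2) :
    ¬ Summable (fun n => (L n : ℝ) * z^n) := by
  intro hS
  obtain ⟨S, h1⟩ := not_summable_aux (fun n => (L n : ℝ)) (fun n => Nat.cast_nonneg _)
    (by simp [L_zero]) (fun n => by rw [L_succ]; push_cast; rfl) z hz hz1 hS
  have h3 : (1-z) * (1-z)⁻¹ = 1 := mul_inv_cancel₀ (by linarith)
  have h4 : (1-z) * (2*z*S+z-1)^2 = (1-z)^3 - 4*z^2 := by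
    linear_combination (-4*z*(1-z)) * h1 + (-4*z^2) * h3
  have : 0 ≤ (1-z) * (2*z*S+z-1)^2 := mul_nonneg (by linarith) (sq_nonneg _)
  linarith

lemma L_lower (z w : ℝ) (hz : 0 < z) (hz1 : z < 1) (hf : (1-z)^3 < 4*z^2) (hw : z < w) :
    ∃ c > 0, ∀ n, c ≤ (L (n+1) : ℝ) * w^n := by
  have hw0 : 0 < w := hz.trans hw
  have hk : ∃ k, 1 ≤ (L k : ℝ) * w^(k+1) := by
    by_contra! hcon
    apply not_summable z hz hz1 hf
    have hq : z / w < 1 := (div_lt_one hw0).2 hw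
    refine Summable.of_nonneg_of_le (fun n => by positivity) (fun n => ?_)
      ((summable_geometric_of_lt_one (by positivity) hq).mul_left (1/w))
    have h1 : (L n : ℝ) * z^n = (L n : ℝ) * w^(n+1) * (1/w * (z/w)^n) := by
      rw [div_pow, pow_succ]; field_simp
    rw [h1]
    exact mul_le_of_le_one_left (by positivity) (hcon n).le
  obtain ⟨k, hk⟩ := hk
  obtain ⟨m, -, hm⟩ := Finset.exists_min_image (Finset.range (k+1)) (fun n => (L (n+1) : ℝ) * w^n)
    ⟨0, by simp⟩
  refine ⟨(L (m+1) : ℝ) * w^m, ?_, ?_⟩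
  · have := L_pos m
    positivity
  · intro n
    induction n using Nat.strong_induction_on with
    | _ n ih =>
      by_cases hn : n < k + 1
      · exact hm n (by simpa using hn)
      · obtain ⟨j, rfl⟩ : ∃ j, n = j + (k+1) := ⟨n - (k+1), by omega⟩
        have h1 : (L k : ℝ) * L (j+1) ≤ L (j + (k+1) + 1) := by
          have := L_super k (j+1)
          rw [show k + (j+1) + 1 = j + (k+1) + 1 by ring] at this
          exact_mod_cast this
        calc _ ≤ (L (j+1) : ℝ) * w^j := ih j (by omega)
          _ ≤ ((L k : ℝ) * w^(k+1)) * ((L (j+1) : ℝ) * w^j) :=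
            le_mul_of_one_le_left (by positivity) hk
          _ = ((L k : ℝ) * L (j+1)) * w^(j+(k+1)) := by rw [pow_add]; ring
          _ ≤ _ := by gcongr

lemma exists_rho : ∃ r : ℝ, 0 < r ∧ r < 1 ∧ (1-r)^3 = 4*r^2 := by
  have h := intermediate_value_Icc' (f := fun r : ℝ => (1-r)^3 - 4*r^2) (zero_le_one)
    (by fun_prop)
  obtain ⟨r, ⟨h0, h1⟩, hr⟩ := h (show (0:ℝ) ∈ _ by norm_num)
  simp only at hr
  refine ⟨r, lt_of_le_of_ne h0 ?_, lt_of_le_of_ne h1 ?_, by linarith⟩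
  · rintro rfl; norm_num at hr
  · rintro rfl; norm_num at hr

lemma L_upper (r : ℝ) (h0 : 0 < r) (h1 : r < 1) (hr : (1-r)^3 = 4*r^2) (N : ℕ) :
    ∑ n ∈ Finset.range N, (L n : ℝ) * r^n ≤ (1-r)/(2*r) := by
  induction N with
  | zero => simp; exact div_nonneg (by linarith) (by linarith)
  | succ N ih =>
    have := step (fun n => (L n : ℝ)) (fun _ => 0) (fun n => by positivity) (by simp [L_zero])
      (fun n => by rw [L_succ]; push_cast; simp) r h0 h1 N
    simp only [zero_mul, Finset.sum_const_zero, add_zero] at this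
    refine this.trans ?_
    have hy : r / (1-r) + r * ((1-r)/(2*r)) + r * ((1-r)/(2*r))^2 = (1-r)/(2*r) := by
      have : 1 - r ≠ 0 := by linarith
      field_simp
      linear_combination (-1 : ℝ) * hr
    have hnn : 0 ≤ ∑ n ∈ Finset.range N, (L n : ℝ) * r^n := Finset.sum_nonneg fun n _ => by positivity
    rw [← hy]
    gcongr

lemma A_upper (M₀ : Term) (r : ℝ) (h0 : 0 < r) (h1 : r < 1) (hr : (1-r)^3 = 4*r^2) :
    ∃ z y : ℝ, r < z ∧ z < 1 ∧ ∀ n, (A M₀ n : ℝ) * z^n ≤ y := by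
  set m := M₀.size with hm
  have hmpos : 0 < m := size_pos M₀
  set y := (1-r)/(2*r) with hy
  have e1 : ∀ᶠ z in nhds r, z < 1 := eventually_lt_nhds h1
  have e2 : ∀ᶠ z in nhds r, ∑ n ∈ Finset.range (m+1), (L n : ℝ) * z^n < y := by
    have hc : Continuous (fun z : ℝ => ∑ n ∈ Finset.range (m+1), (L n : ℝ) * z^n) := by fun_prop
    refine hc.continuousAt.eventually_lt_const ?_
    have := L_upper r h0 h1 hr (m+2)
    rw [Finset.sum_range_succ] at this
    have hp : 0 < (L (m+1) : ℝ) * r^(m+1) := by have := L_pos m; positivity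
    linarith
  have e3 : ∀ᶠ z in nhds r, z/(1-z) + z * y + z * y^2 - z^m < y := by
    have hc : ContinuousAt (fun z : ℝ => z/(1-z) + z * y + z * y^2 - z^m) r := by
      have : 1 - r ≠ 0 := by linarith
      fun_prop (disch := assumption)
    refine hc.eventually_lt_const ?_
    have hy' : r / (1-r) + r * y + r * y^2 = y := by
      have : 1 - r ≠ 0 := by linarith
      rw [hy]
      field_simp
      linear_combination (-1 : ℝ) * hr
    have : 0 < r^m := by positivity
    linarith
  have e4 : ∀ᶠ z in nhdsWithin r (Set.Ioi r), r < z := eventually_mem_nhdsWithin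
  obtain ⟨z, ⟨⟨hz1, hz2⟩, hz3⟩, hz4⟩ :=
    ((((e1.and e2).and e3).filter_mono nhdsWithin_le_nhds).and e4).exists
  have hz0 : 0 < z := h0.trans hz4
  have hy0 : 0 ≤ y := div_nonneg (by linarith) (by linarith)
  have hAL : ∀ n, (A M₀ n : ℝ) ≤ L n := fun n => by exact_mod_cast A_le_L M₀ n
  have key : ∀ N, ∑ n ∈ Finset.range N, (A M₀ n : ℝ) * z^n ≤ y := by
    intro N
    induction N with
    | zero => simpa using hy0
    | succ N ih =>
      by_cases hN : N ≤ m
      · refine le_trans ?_ hz2.le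
        calc _ ≤ ∑ n ∈ Finset.range (N+1), (L n : ℝ) * z^n :=
              Finset.sum_le_sum fun n _ => by have := hAL n; gcongr
          _ ≤ _ := Finset.sum_le_sum_of_subset_of_nonneg
              (Finset.range_mono (by omega)) (fun _ _ _ => by positivity)
      · have h := step (fun n => (A M₀ n : ℝ)) (fun n => if n = m then 1 else 0)
          (fun n => by positivity) (by
            have := A_le_L M₀ 0
            rw [L_zero] at this
            simpa using this)
          (fun n => by have := A_succ M₀ n; exact_mod_cast this) z hz0 hz1 N
        have hnn : 0 ≤ ∑ n ∈ Finset.range N, (A M₀ n : ℝ) * z^n :=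
          Finset.sum_nonneg fun n _ => by positivity
        have hs : z^m ≤ ∑ n ∈ Finset.range N, (if n+1 = m then (1:ℝ) else 0) * z^(n+1) := by
          have := Finset.single_le_sum (s := Finset.range N)
            (f := fun n => (if n+1 = m then (1:ℝ) else 0) * z^(n+1))
            (fun n _ => by positivity) (a := m-1) (by simp; omega)
          have e : m - 1 + 1 = m := by omega
          simpa [e] using this
        have hb : z/(1-z) + z * ∑ n ∈ Finset.range N, (A M₀ n : ℝ) * z^n
            + z * (∑ n ∈ Finset.range N, (A M₀ n : ℝ) * z^n)^2 ≤ z/(1-z) + z * y + z * y^2 := by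
          gcongr
        linarith
  refine ⟨z, y, hz4, hz1, fun n => ?_⟩
  have := key (n+1)
  rw [Finset.sum_range_succ] at this
  have hnn : 0 ≤ ∑ n ∈ Finset.range n, (A M₀ n : ℝ) * z^n :=
          Finset.sum_nonneg fun n _ => by positivity
  linarith

end Dens

theorem density_avoiding_subterm_zero (M₀ : Term) :
    Filter.Tendsto
      (fun n : ℕ =>
        (Nat.card {t : Term // ¬ Subterm M₀ t ∧ t.size = n} : ℝ) / (L n : ℝ))
      Filter.atTop (nhds 0) := by
  change Filter.Tendsto (fun n : ℕ => (Dens.A M₀ n : ℝ) / (L n : ℝ)) Filter.atTop (nhds 0)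
  obtain ⟨r, h0, h1, hr⟩ := Dens.exists_rho
  obtain ⟨z, y, hrz, hz1, hA⟩ := Dens.A_upper M₀ r h0 h1 hr
  obtain ⟨w, hrw, hwz⟩ := exists_between hrz
  obtain ⟨v, hrv, hvw⟩ := exists_between hrw
  have hv0 : 0 < v := h0.trans hrv
  have hv : (1-v)^3 < 4*v^2 := by
    have a : (1-v)^3 < (1-r)^3 := by
      apply pow_lt_pow_left₀ <;> first | linarith | norm_num
    have b : r^2 < v^2 := by
      apply pow_lt_pow_left₀ <;> first | linarith | norm_num
    linarith
  obtain ⟨c, hc, hL⟩ := Dens.L_lower v w hv0 (by linarith) hv hvw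
  have hw0 : 0 < w := hv0.trans hvw
  have hz0 : 0 < z := hw0.trans hwz
  rw [← Filter.tendsto_add_atTop_iff_nat 1]
  have hq : w / z < 1 := (div_lt_one hz0).2 hwz
  have hlim : Filter.Tendsto (fun n : ℕ => (y / (c * z)) * (w/z)^n) Filter.atTop (nhds 0) := by
    simpa using (tendsto_pow_atTop_nhds_zero_of_lt_one (by positivity) hq).const_mul (y / (c*z))
  refine squeeze_zero (fun n => by positivity) (fun n => ?_) hlim
  have hp : (0:ℝ) < L (n+1) := by exact_mod_cast Dens.L_pos n
  rw [div_le_iff₀ hp]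
  have a := hA (n+1)
  have b := hL n
  have hy : 0 ≤ y := le_trans (by positivity) a
  have e : y / (c*z) * (w/z)^n * (L (n+1) : ℝ) = (y / (c * z^(n+1))) * ((L (n+1) : ℝ) * w^n) := by
    rw [div_pow, pow_succ]; field_simp
  rw [e]
  calc (Dens.A M₀ (n+1) : ℝ) ≤ y / z^(n+1) := by rw [le_div_iff₀ (by positivity)]; exact a
    _ = (y / (c * z^(n+1))) * c := by field_simp
    _ ≤ _ := by gcongr
end

section
/- For every fixed lambda term M₀, the density among plain lambda terms of terms that contain M₀ as a subterm is 1: the sequence n ↦ (number of lambda terms t of size n such that M₀ is a subterm of t) / L n converges to 1 as n → ∞. -/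
namespace DensityAux

open Finset Classical

theorem size_pos (t : Term) : 1 ≤ t.size := by
  cases t <;> simp [Term.size]

theorem finite_le (n : ℕ) : {t : Term | t.size ≤ n}.Finite := by
  induction n with
  | zero =>
    convert Set.finite_empty
    ext t
    have := size_pos t
    simp
    omega
  | succ n ih =>
    refine (((Set.finite_Iic n).image Term.var).union
      ((ih.image Term.abs).union (Set.Finite.image2 Term.app ih ih))).subset ?_
    intro t ht
    simp only [Set.mem_ofPred_eq] at ht
    cases t with
    | var k =>
      left
      simp only [Term.size] at ht
      exact ⟨k, by simp; omega, rfl⟩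
    | abs M =>
      right; left
      simp only [Term.size] at ht
      exact ⟨M, by simp; omega, rfl⟩
    | app M N =>
      right; right
      simp only [Term.size] at ht
      exact ⟨M, by simp; omega, N, by simp; omega, rfl⟩

/-- The finite set of terms of size `n`. -/
noncomputable def T (n : ℕ) : Finset Term :=
  ((finite_le n).subset (t := {t | t.size = n}) (fun _ h => le_of_eq h)).toFinset

theorem mem_T {n : ℕ} {t : Term} : t ∈ T n ↔ t.size = n := by simp [T]

theorem L_eq (n : ℕ) : L n = (T n).card := by
  unfold L
  rw [Nat.subtype_card]
  intro t
  exact mem_T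

/-- Combining terms from a family of finite sets. -/
noncomputable def comb (F : ℕ → Finset Term) (n : ℕ) : Finset Term :=
  insert (Term.var n) ((F n).image Term.abs ∪
    (antidiagonal n).biUnion fun p => (F p.1 ×ˢ F p.2).image fun q => Term.app q.1 q.2)

theorem card_comb_le (F : ℕ → Finset Term) (n : ℕ) :
    (comb F n).card ≤ 1 + (F n).card +
      ∑ p ∈ antidiagonal n, (F p.1).card * (F p.2).card := by
  unfold comb
  refine (card_insert_le _ _).trans ?_
  have h1 := card_union_le ((F n).image Term.abs)
    ((antidiagonal n).biUnion fun p => (F p.1 ×ˢ F p.2).image fun q => Term.app q.1 q.2)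
  have h2 : ((F n).image Term.abs).card ≤ _ := card_image_le
  have h3 : ((antidiagonal n).biUnion fun p =>
      (F p.1 ×ˢ F p.2).image fun q => Term.app q.1 q.2).card ≤
      ∑ p ∈ antidiagonal n, (F p.1).card * (F p.2).card := by
    refine card_biUnion_le.trans (sum_le_sum fun p _ => ?_)
    exact card_image_le.trans (card_product _ _).le
  omega

theorem comb_T (n : ℕ) : comb T n = T (n + 1) := by
  ext t
  simp only [comb, mem_insert, mem_union, mem_image, mem_biUnion, mem_product, mem_T,
    HasAntidiagonal.mem_antidiagonal, Prod.exists]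
  cases t with
  | var k => simp [Term.size]
  | abs M => simp [Term.size]
  | app M N => simp [Term.size]

theorem card_T_succ (n : ℕ) : (T (n + 1)).card = 1 + (T n).card +
      ∑ p ∈ antidiagonal n, (T p.1).card * (T p.2).card := by
  rw [← comb_T]
  unfold comb
  rw [card_insert_of_notMem (by simp), card_union_of_disjoint, card_image_of_injective,
    card_biUnion]
  · have : ∀ p ∈ antidiagonal n, ((T p.1 ×ˢ T p.2).image fun q => Term.app q.1 q.2).card =
        (T p.1).card * (T p.2).card := by
      intro p _
      rw [card_image_of_injective, card_product]
      rintro ⟨a, b⟩ ⟨c, d⟩ h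
      simpa using h
    rw [sum_congr rfl this]
    omega
  · rintro ⟨a, b⟩ _ ⟨c, d⟩ _ hne
    rw [Function.onFun, disjoint_left]
    intro t h1 h2
    simp only [mem_image, mem_product, mem_T, Prod.exists] at h1 h2
    obtain ⟨u, v, ⟨hu, hv⟩, rfl⟩ := h1
    obtain ⟨u', v', ⟨hu', hv'⟩, h⟩ := h2
    simp only [Term.app.injEq] at h
    apply hne
    rw [← hu, ← hv, ← hu', ← hv', h.1, h.2]
  · intro a b h
    simpa using h
  · rw [disjoint_left]
    intro t h1 h2
    simp only [mem_image, mem_biUnion] at h1 h2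
    obtain ⟨u, _, rfl⟩ := h1
    obtain ⟨_, _, _, _, h⟩ := h2
    cases h

/-- Terms of size `n` avoiding `M₀`. -/
noncomputable def B (M₀ : Term) (n : ℕ) : Finset Term := (T n).filter fun t => ¬ Subterm M₀ t

theorem direct_size {a b : Term} (h : DirectSubterm a b) : a.size < b.size := by
  cases h <;> simp [Term.size]

theorem subterm_size {a b : Term} (h : Subterm a b) : a.size ≤ b.size := by
  induction h with
  | refl => exact le_rfl
  | tail _ h ih => exact ih.trans (direct_size h).le

theorem card_B_succ (M₀ : Term) (n : ℕ) :
    (B M₀ (n + 1)).card + (if n + 1 = M₀.size then 1 else 0) ≤ 1 + (B M₀ n).card +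
      ∑ p ∈ antidiagonal n, (B M₀ p.1).card * (B M₀ p.2).card := by
  refine le_trans ?_ (card_comb_le (B M₀) n)
  have key : ∀ t : Term, t.size = n + 1 → (∀ u, DirectSubterm u t → ¬ Subterm M₀ u) →
      t ∈ comb (B M₀) n := by
    intro t ht hu
    simp only [comb, mem_insert, mem_union, mem_image, mem_biUnion, mem_product, mem_T,
      HasAntidiagonal.mem_antidiagonal, Prod.exists, B, mem_filter]
    cases t with
    | var k => simpa [Term.size] using ht
    | abs M => 
      have := hu _ (DirectSubterm.abs M)
      simpa [Term.size, this] using ht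
    | app M N => 
      have h1 := hu _ (DirectSubterm.appLeft M N)
      have h2 := hu _ (DirectSubterm.appRight M N)
      simpa [Term.size, h1, h2] using ht
  have hsub : B M₀ (n + 1) ⊆ comb (B M₀) n := by
    intro t ht
    simp only [B, mem_filter, mem_T] at ht
    exact key t ht.1 fun u hu hs => ht.2 (Relation.ReflTransGen.tail hs hu)
  split_ifs with h
  · have hn : M₀ ∉ B M₀ (n + 1) := by
      simp only [B, mem_filter, not_and, not_not]
      exact fun _ => Relation.ReflTransGen.refl
    rw [← card_insert_of_notMem hn]
    apply card_le_card
    apply insert_subset _ hsub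
    refine key _ h.symm fun u hu hs => ?_
    have := direct_size hu
    have := subterm_size hs
    omega
  · simpa using card_le_card hsub

theorem card_T_zero : (T 0).card = 0 := by
  rw [card_eq_zero, eq_empty_iff_forall_notMem]
  intro t ht
  have := size_pos t
  rw [mem_T] at ht
  omega

theorem card_B_zero (M₀ : Term) : (B M₀ 0).card = 0 := by
  have : (B M₀ 0).card ≤ (T 0).card := card_filter_le _ _
  rw [card_T_zero] at this
  omega

theorem card_sub (M₀ : Term) (n : ℕ) :
    Nat.card {t : Term // Subterm M₀ t ∧ t.size = n} + (B M₀ n).card = (T n).card := by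
  rw [B, ← card_filter_add_card_filter_not (s := T n) (fun t => Subterm M₀ t)]
  congr 1
  rw [Nat.subtype_card]
  intro t
  simp [mem_T, and_comm]

theorem conv_le (f : ℕ → ℝ) (hf : ∀ n, 0 ≤ f n) (N : ℕ) :
    ∑ n ∈ range N, ∑ p ∈ antidiagonal n, f p.1 * f p.2 ≤ (∑ n ∈ range N, f n) ^ 2 := by
  rw [sq, sum_mul_sum, ← sum_product', ← sum_biUnion]
  · apply sum_le_sum_of_subset_of_nonneg
    · rintro ⟨i, j⟩ h
      simp at h ⊢
      omega
    · intro p _ _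
      exact mul_nonneg (hf _) (hf _)
  · intro a _ b _ hne
    rw [Function.onFun, disjoint_left]
    intro p h1 h2
    simp at h1 h2
    omega

theorem geom_le (x : ℝ) (h0 : 0 < x) (h1 : x < 1) (s N : ℕ) :
    ∑ n ∈ range N, (if n = s then 0 else 1) * x ^ n ≤ 1 / (1 - x) - x ^ s := by
  have hle : ∑ n ∈ range N, (if n = s then 0 else 1) * x ^ n ≤
      ∑ n ∈ range (max N (s + 1)), (if n = s then 0 else 1) * x ^ n := by
    apply sum_le_sum_of_subset_of_nonneg
    · exact range_subset_range.2 (le_max_left _ _)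
    · intro i _ _
      split_ifs <;> simp <;> positivity
  refine hle.trans ?_
  have e : ∀ n, (if n = s then 0 else 1) * x ^ n = x ^ n - if n = s then x ^ s else 0 := by
    intro n
    split_ifs with h <;> simp [h]
  simp_rw [e]
  rw [sum_sub_distrib, sum_ite_eq' , if_pos (by simp)]
  have := (hasSum_geometric_of_lt_one h0.le h1).summable.sum_le_tsum
    (range (max N (s + 1))) (fun i _ => by positivity)
  rw [tsum_geometric_of_lt_one h0.le h1] at this
  rw [one_div]
  linarith

/-- Exponential upper bound for avoiding terms. -/
theorem B_bound (M₀ : Term) (x y : ℝ) (h0 : 0 < x) (h1 : x < 1) (hy : 0 ≤ y)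
    (h : x / (1 - x) - x ^ M₀.size + x * y + x * y ^ 2 ≤ y) (n : ℕ) :
    ((B M₀ n).card : ℝ) * x ^ n ≤ y := by
  obtain ⟨s, hs⟩ : ∃ s, M₀.size = s + 1 := ⟨M₀.size - 1, by have := size_pos M₀; omega⟩
  set f : ℕ → ℝ := fun n => ((B M₀ n).card : ℝ) * x ^ n with hf
  have hf0 : ∀ n, 0 ≤ f n := fun n => by simp only [hf]; positivity
  have rec1 : ∀ n, f (n + 1) ≤ x * ((if n = s then 0 else 1) * x ^ n) + x * f n +
      x * ∑ p ∈ antidiagonal n, f p.1 * f p.2 := by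
    intro n
    have hc := card_B_succ M₀ n
    rw [hs] at hc
    have hc' : ((B M₀ (n + 1)).card : ℝ) ≤ (if n = s then 0 else 1) + (B M₀ n).card +
        ∑ p ∈ antidiagonal n, ((B M₀ p.1).card : ℝ) * (B M₀ p.2).card := by
      have := (Nat.cast_le (α := ℝ)).2 hc
      push_cast at this
      by_cases hns : n = s
      · simp [hns] at this ⊢
        linarith
      · simp [hns] at this ⊢
        linarith
    have e : ∑ p ∈ antidiagonal n, f p.1 * f p.2 =
        (∑ p ∈ antidiagonal n, ((B M₀ p.1).card : ℝ) * (B M₀ p.2).card) * x ^ n := by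
      rw [sum_mul]
      refine sum_congr rfl fun p hp => ?_
      rw [← HasAntidiagonal.mem_antidiagonal.1 hp, pow_add]
      simp only [hf]
      ring
    rw [e]
    calc f (n + 1) ≤ _ := mul_le_mul_of_nonneg_right hc' (by positivity)
      _ = _ := by simp only [hf]; ring
  have P : ∀ N, ∑ n ∈ range N, f n ≤ y := by
    intro N
    induction N with
    | zero => simpa using hy
    | succ N ih =>
      rw [sum_range_succ']
      have z : f 0 = 0 := by simp [hf, card_B_zero]
      have hS : 0 ≤ ∑ n ∈ range N, f n := sum_nonneg fun i _ => hf0 i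
      have step := sum_le_sum fun n (_ : n ∈ range N) => rec1 n
      rw [sum_add_distrib, sum_add_distrib, ← mul_sum, ← mul_sum, ← mul_sum] at step
      have g := mul_le_mul_of_nonneg_left (geom_le x h0 h1 s N) h0.le
      have c := mul_le_mul_of_nonneg_left (conv_le f hf0 N) h0.le
      have c1 := mul_le_mul_of_nonneg_left ih h0.le
      have c2 := mul_le_mul_of_nonneg_left (pow_le_pow_left₀ hS ih 2) h0.le
      have e : x * (1 / (1 - x) - x ^ s) = x / (1 - x) - x ^ M₀.size := by
        rw [hs, pow_succ]; ring
      rw [z]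
      linarith
  refine le_trans ?_ (P (n + 1))
  exact single_le_sum (f := f) (fun i _ => hf0 i) (by simp)

/-- If the counts grow slowly, the discriminant is nonnegative. -/
theorem disc (x q : ℝ) (h0 : 0 < x) (hxq : x < q) (h1 : q < 1)
    (h : ∀ m, ((T m).card : ℝ) * q ^ m ≤ q⁻¹) : 4 * x ^ 2 ≤ (1 - x) ^ 3 := by
  have hq : 0 < q := h0.trans hxq
  set f : ℕ → ℝ := fun n => ((T n).card : ℝ) * x ^ n with hf
  have hf0 : ∀ n, 0 ≤ f n := fun n => by simp only [hf]; positivity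
  have hsum : Summable f := by
    refine Summable.of_nonneg_of_le hf0 (fun n => ?_)
      ((summable_geometric_of_lt_one (r := x / q) (by positivity)
        ((div_lt_one hq).2 hxq)).mul_left q⁻¹)
    calc f n = ((T n).card * q ^ n) * (x / q) ^ n := by
          simp only [hf]; rw [div_pow]; field_simp
      _ ≤ _ := mul_le_mul_of_nonneg_right (h n) (by positivity)
  have rec1 : ∀ n, f (n + 1) = x * x ^ n + x * f n +
      x * ∑ p ∈ antidiagonal n, f p.1 * f p.2 := by
    intro n
    have e : ∑ p ∈ antidiagonal n, f p.1 * f p.2 =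
        (∑ p ∈ antidiagonal n, ((T p.1).card : ℝ) * (T p.2).card) * x ^ n := by
      rw [sum_mul]
      refine sum_congr rfl fun p hp => ?_
      rw [← HasAntidiagonal.mem_antidiagonal.1 hp, pow_add]
      simp only [hf]
      ring
    rw [e]
    simp only [hf]
    rw [card_T_succ]
    push_cast
    ring
  have hn : Summable fun n => ‖f n‖ := hsum.norm
  have hx1 : x < 1 := hxq.trans h1
  have hg := summable_geometric_of_lt_one h0.le hx1
  have hc : Summable fun n => ∑ p ∈ antidiagonal n, f p.1 * f p.2 :=
    (summable_norm_sum_mul_antidiagonal_of_summable_norm hn hn).of_norm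
  have hS : ∑' n, f n = x * (1 - x)⁻¹ + x * (∑' n, f n) + x * ((∑' n, f n) * ∑' n, f n) := by
    rw [tsum_mul_tsum_eq_tsum_sum_antidiagonal_of_summable_norm hn hn]
    conv_lhs => rw [hsum.tsum_eq_zero_add]
    simp_rw [rec1]
    rw [((hg.mul_left x).add (hsum.mul_left x)).tsum_add (hc.mul_left x),
      (hg.mul_left x).tsum_add (hsum.mul_left x), tsum_mul_left, tsum_mul_left, tsum_mul_left,
      tsum_geometric_of_lt_one h0.le hx1]
    simp [hf, card_T_zero]
  generalize ∑' n, f n = S at hS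
  have hp : 0 < 1 - x := by linarith
  have e : (1 - x) ^ 3 - 4 * x ^ 2 = (1 - x) * (2 * x * S - (1 - x)) ^ 2 := by
    have : S * (1 - x) = x + x * S * (1 - x) + x * S ^ 2 * (1 - x) := by
      have hi : (1 - x)⁻¹ * (1 - x) = 1 := inv_mul_cancel₀ hp.ne'
      linear_combination (1 - x) * hS + x * hi
    linear_combination (4 * x) * this
  have : 0 ≤ (1 - x) * (2 * x * S - (1 - x)) ^ 2 := by positivity
  linarith

theorem T_mono : Monotone fun n => (T n).card := by
  apply monotone_nat_of_le_succ
  intro n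
  rw [card_T_succ]
  omega

theorem T_super (i j : ℕ) : (T i).card * (T j).card ≤ (T (i + j + 1)).card := by
  rw [card_T_succ]
  have : (T i).card * (T j).card ≤
      ∑ p ∈ antidiagonal (i + j), (T p.1).card * (T p.2).card :=
    single_le_sum (f := fun p : ℕ × ℕ => (T p.1).card * (T p.2).card)
      (fun _ _ => Nat.zero_le _) (a := (i, j)) (by simp)
  omega

/-- Exponential lower bound. -/
theorem T_lower (q : ℝ) (h0 : 0 < q) (h1 : q < 1) (m : ℕ)
    (h : 1 ≤ ((T m).card : ℝ) * q ^ (m + 1)) (n : ℕ) (hn : m ≤ n) :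
    q ^ m ≤ ((T n).card : ℝ) * q ^ n := by
  have hk : ∀ k : ℕ, 1 ≤ ((T (m + k * (m + 1))).card : ℝ) * q ^ ((k + 1) * (m + 1)) := by
    intro k
    induction k with
    | zero => simpa using h
    | succ k ih =>
      have e : m + (k + 1) * (m + 1) = (m + k * (m + 1)) + m + 1 := by ring
      have hs : ((T (m + k * (m + 1))).card : ℝ) * (T m).card ≤
          (T (m + (k + 1) * (m + 1))).card := by
        rw [e]; exact_mod_cast T_super _ _
      calc (1 : ℝ) ≤ _ := one_le_mul_of_one_le_of_one_le ih h
        _ = (((T (m + k * (m + 1))).card : ℝ) * (T m).card) * q ^ ((k + 1 + 1) * (m + 1)) := by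
          ring
        _ ≤ _ := mul_le_mul_of_nonneg_right hs (by positivity)
  set k := (n - m) / (m + 1) with hkd
  have hd := Nat.div_add_mod (n - m) (m + 1)
  have hlt : (n - m) % (m + 1) < m + 1 := Nat.mod_lt (n - m) (Nat.succ_pos m)
  rw [← hkd] at hd
  have hcomm : (m + 1) * k = k * (m + 1) := mul_comm _ _
  have hle : m + k * (m + 1) ≤ n := by omega
  have hle2 : n ≤ m + k * (m + 1) + m := by omega
  have hm : ((T (m + k * (m + 1))).card : ℝ) ≤ (T n).card := by exact_mod_cast T_mono hle
  have h3 : q ^ ((k + 1) * (m + 1)) * q ^ m ≤ q ^ n := by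
    rw [← pow_add]
    apply pow_le_pow_of_le_one h0.le h1.le
    have : (k + 1) * (m + 1) = k * (m + 1) + (m + 1) := by ring
    omega
  calc q ^ m = 1 * q ^ m := (one_mul _).symm
    _ ≤ (((T (m + k * (m + 1))).card : ℝ) * q ^ ((k + 1) * (m + 1))) * q ^ m :=
      mul_le_mul_of_nonneg_right (hk k) (by positivity)
    _ = ((T (m + k * (m + 1))).card : ℝ) * (q ^ ((k + 1) * (m + 1)) * q ^ m) := by ring
    _ ≤ ((T n).card : ℝ) * q ^ n := mul_le_mul hm h3 (by positivity) (by positivity)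

theorem exists_radius : ∃ ρ : ℝ, 0 < ρ ∧ ρ < 1 ∧ (1 - ρ) ^ 3 = 4 * ρ ^ 2 := by
  have hc : ContinuousOn (fun x : ℝ => (1 - x) ^ 3 - 4 * x ^ 2) (Set.Icc 0 1) := by fun_prop
  have := intermediate_value_Icc' (zero_le_one' ℝ) hc
  obtain ⟨ρ, ⟨h0, h1⟩, h⟩ := this (show (0 : ℝ) ∈ _ by norm_num)
  simp only at h
  refine ⟨ρ, lt_of_le_of_ne h0 ?_, lt_of_le_of_ne h1 ?_, by linarith⟩
  · rintro rfl
    norm_num at h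
  · rintro rfl
    norm_num at h

theorem exists_params (s : ℕ) : ∃ x q r : ℝ, 0 < x ∧ x < q ∧ q < r ∧ r < 1 ∧
    (1 - x) ^ 3 < 4 * x ^ 2 ∧ r / (1 - r) - r ^ s ≤ (1 - r) ^ 2 / (4 * r) := by
  obtain ⟨ρ, h0, h1, h⟩ := exists_radius
  have hp : 0 < 1 - ρ := by linarith
  have hlt : ρ / (1 - ρ) - ρ ^ s < (1 - ρ) ^ 2 / (4 * ρ) := by
    have e : ρ / (1 - ρ) = (1 - ρ) ^ 2 / (4 * ρ) := by
      rw [div_eq_div_iff hp.ne' (by positivity)]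
      linear_combination -h
    rw [e]
    have : 0 < ρ ^ s := by positivity
    linarith
  have hc1 : ContinuousAt (fun r : ℝ => r / (1 - r) - r ^ s) ρ := by
    refine ContinuousAt.sub (ContinuousAt.div ?_ ?_ hp.ne') ?_ <;> fun_prop
  have hc2 : ContinuousAt (fun r : ℝ => (1 - r) ^ 2 / (4 * r)) ρ := by
    refine ContinuousAt.div ?_ ?_ (by positivity) <;> fun_prop
  have ev := hc1.eventually_lt hc2 hlt
  have ev2 : ∀ᶠ r in nhdsWithin ρ (Set.Ioi ρ), r / (1 - r) - r ^ s < (1 - r) ^ 2 / (4 * r) :=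
    ev.filter_mono nhdsWithin_le_nhds
  have ev3 : ∀ᶠ r in nhdsWithin ρ (Set.Ioi ρ), r ∈ Set.Ioo ρ 1 := Ioo_mem_nhdsGT h1
  obtain ⟨r, hr, hr1, hr2⟩ := (ev2.and ev3).exists
  refine ⟨ρ + (r - ρ) / 3, ρ + 2 * (r - ρ) / 3, r, by linarith, by linarith, by linarith, hr2,
    ?_, hr.le⟩
  have hx : ρ < ρ + (r - ρ) / 3 := by linarith
  have hx1 : ρ + (r - ρ) / 3 < 1 := by linarith
  generalize ρ + (r - ρ) / 3 = x at hx hx1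
  have a1 : (1 - x) ^ 3 < (1 - ρ) ^ 3 := pow_lt_pow_left₀ (by linarith) (by linarith) (by norm_num)
  have a2 : ρ ^ 2 < x ^ 2 := pow_lt_pow_left₀ hx h0.le (by norm_num)
  linarith

theorem ratio_tendsto (M₀ : Term) : Filter.Tendsto
    (fun n => ((B M₀ n).card : ℝ) / (T n).card) Filter.atTop (nhds 0) := by
  obtain ⟨x, q, r, hx, hxq, hqr, hr, hd, hb⟩ := exists_params M₀.size
  have hq : 0 < q := hx.trans hxq
  have hr0 : 0 < r := hq.trans hqr
  have hq1 : q < 1 := hqr.trans hr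
  have hB := B_bound M₀ r ((1 - r) / (2 * r)) hr0 hr
    (div_nonneg (by linarith) (by linarith)) (by
      have e : (1 - r) / (2 * r) - r * ((1 - r) / (2 * r)) - r * ((1 - r) / (2 * r)) ^ 2 =
          (1 - r) ^ 2 / (4 * r) := by
        field_simp
        ring
      linarith)
  set y := (1 - r) / (2 * r)
  have hm : ∃ m, 1 ≤ ((T m).card : ℝ) * q ^ (m + 1) := by
    by_contra! hcon
    have := disc x q hx hxq hq1 (fun m => by
      have := (hcon m).le
      rw [pow_succ, ← mul_assoc] at this
      rwa [← one_div, le_div_iff₀ hq])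
    linarith
  obtain ⟨m, hm⟩ := hm
  have hL := T_lower q hq hq1 m hm
  have hlim : Filter.Tendsto (fun n => y / q ^ m * (q / r) ^ n) Filter.atTop (nhds 0) := by
    have := (tendsto_pow_atTop_nhds_zero_of_lt_one (r := q / r) (by positivity)
      ((div_lt_one hr0).2 hqr)).const_mul (y / q ^ m)
    simpa using this
  refine squeeze_zero' (Filter.Eventually.of_forall fun n => by positivity) ?_ hlim
  filter_upwards [Filter.eventually_ge_atTop m] with n hn
  have h1 := hB n
  have h2 := hL n hn
  have hqm : 0 < q ^ m := by positivity
  have hqn : 0 < q ^ n := by positivity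
  have hrn : 0 < r ^ n := by positivity
  have hT : 0 < ((T n).card : ℝ) := by
    by_contra hneg
    have : ((T n).card : ℝ) = 0 := le_antisymm (not_lt.1 hneg) (Nat.cast_nonneg _)
    rw [this] at h2
    linarith
  have hy : 0 ≤ y := le_trans (by positivity) h1
  rw [div_le_iff₀ hT]
  calc ((B M₀ n).card : ℝ) = ((B M₀ n).card * r ^ n) / r ^ n := by field_simp
    _ ≤ y / r ^ n := by gcongr
    _ = y / q ^ m / r ^ n * q ^ m := by field_simp
    _ ≤ y / q ^ m / r ^ n * ((T n).card * q ^ n) :=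
      mul_le_mul_of_nonneg_left h2 (by positivity)
    _ = y / q ^ m * (q / r) ^ n * (T n).card := by rw [div_pow]; ring

end DensityAux

theorem density_containing_subterm_one (M₀ : Term) :
    Filter.Tendsto
      (fun n : ℕ =>
        (Nat.card {t : Term // Subterm M₀ t ∧ t.size = n} : ℝ) / (L n : ℝ))
      Filter.atTop (nhds 1) := by
  have h := (DensityAux.ratio_tendsto M₀).const_sub 1
  rw [sub_zero] at h
  refine h.congr' ?_
  filter_upwards [Filter.eventually_ge_atTop 1] with n hn
  have hT : 1 ≤ (DensityAux.T n).card := by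
    obtain ⟨k, rfl⟩ : ∃ k, n = k + 1 := ⟨n - 1, by omega⟩
    rw [DensityAux.card_T_succ]
    omega
  have hT' : ((DensityAux.T n).card : ℝ) ≠ 0 := by
    have : (DensityAux.T n).card ≠ 0 := by omega
    exact_mod_cast this
  have hs := DensityAux.card_sub M₀ n
  have hs' : (Nat.card {t : Term // Subterm M₀ t ∧ t.size = n} : ℝ) +
      (DensityAux.B M₀ n).card = (DensityAux.T n).card := by exact_mod_cast hs
  rw [DensityAux.L_eq, eq_div_iff hT', sub_mul, div_mul_cancel₀ _ hT']
  linarith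
end

section
/- Asymptotically almost no lambda term is strongly normalizing: the sequence n ↦ (number of strongly β-normalizing lambda terms of size n) / L n converges to 0 as n → ∞. -/
namespace Term

/-- `lift M d` adds 1 to every free de Bruijn index of `M` that is `≥ d`. -/
def lift : Term → ℕ → Term
  | .var k, d => if k < d then .var k else .var (k + 1)
  | .app M N, d => .app (M.lift d) (N.lift d)
  | .abs M, d => .abs (M.lift (d + 1))

/-- `subst M k N` replaces the index `k` in `M` by the appropriately lifted `N`
and decrements the free indices greater than `k`. -/
def subst : Term → ℕ → Term → Term
  | .var i, k, N => if i = k then (fun M => Term.lift M 0)^[k] N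
                    else if k < i then .var (i - 1) else .var i
  | .app M₁ M₂, k, N => .app (M₁.subst k N) (M₂.subst k N)
  | .abs M, k, N => .abs (M.subst (k + 1) N)

/-- One-step β-reduction. -/
inductive Beta : Term → Term → Prop
  | beta (M N : Term) : Beta (.app (.abs M) N) (M.subst 0 N)
  | appLeft {M M' : Term} (N : Term) : Beta M M' → Beta (.app M N) (.app M' N)
  | appRight (M : Term) {N N' : Term} : Beta N N' → Beta (.app M N) (.app M N')
  | abs {M M' : Term} : Beta M M' → Beta (.abs M) (.abs M')

/-- A term is strongly normalizing if there is no infinite β-reduction sequence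
starting from it, i.e. it is accessible for the reversed one-step reduction. -/
def StronglyNormalizing (t : Term) : Prop := Acc (fun a b => Beta b a) t

end Term

namespace Term

open scoped ENNReal

/-- The self-application combinator `λx. x x`. -/
def om : Term := .abs (.app (.var 0) (.var 0))

/-- The term has no subterm equal to `om om`. -/
def NoOm : Term → Prop
  | var _ => True
  | app M N => NoOm M ∧ NoOm N ∧ ¬ (M = om ∧ N = om)
  | abs M => NoOm M

theorem sn_of_map (f : Term → Term) (hf : ∀ a b, Beta a b → Beta (f a) (f b)) (t : Term)
    (h : StronglyNormalizing (f t)) : StronglyNormalizing t := by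
  unfold StronglyNormalizing at *
  generalize hs : f t = s at h
  induction h generalizing t with
  | intro s _ ih =>
    subst hs
    exact Acc.intro _ fun b hb => ih (f b) (hf _ _ hb) b rfl

theorem not_sn_omega : ¬ StronglyNormalizing (.app om om) := by
  intro h
  have hb : Beta (.app om om) (.app om om) := by
    have := Beta.beta (.app (.var 0) (.var 0)) om
    simpa [subst, om] using this
  unfold StronglyNormalizing at h
  generalize hs : Term.app om om = s at h
  induction h with
  | intro s _ ih =>
    subst hs
    exact ih _ hb rfl

theorem noOm_of_sn (t : Term) (h : StronglyNormalizing t) : NoOm t := by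
  induction t with
  | var k => trivial
  | app M N ihM ihN =>
    refine ⟨ihM ?_, ihN ?_, ?_⟩
    · exact sn_of_map (fun M => .app M N) (fun a b hab => Beta.appLeft N hab) M h
    · exact sn_of_map (fun N => .app M N) (fun a b hab => Beta.appRight M hab) N h
    · rintro ⟨rfl, rfl⟩
      exact not_sn_omega h
  | abs M ih => exact ih (sn_of_map (fun M => .abs M) (fun a b hab => Beta.abs hab) M h)

theorem size_pos (t : Term) : 0 < t.size := by
  cases t <;> simp [size]

theorem finite_size_le (n : ℕ) : {t : Term | t.size ≤ n}.Finite := by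
  induction n with
  | zero =>
    convert Set.finite_empty
    ext t
    have := size_pos t
    simp; omega
  | succ n ih =>
    refine Set.Finite.subset (((Set.finite_le_nat n).image Term.var).union
      (((ih.prod ih).image (fun p => Term.app p.1 p.2)).union (ih.image Term.abs))) ?_
    rintro (k | ⟨M, N⟩ | M) h
    · left; exact ⟨k, by simpa [size] using h, rfl⟩
    · right; left
      simp only [size, Set.mem_setOf_eq] at h
      exact ⟨(M, N), ⟨by simp; omega, by simp; omega⟩, rfl⟩
    · right; right
      exact ⟨M, by simpa [size] using h, rfl⟩

instance finite_size (n : ℕ) : Finite {t : Term // t.size = n} :=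
  Set.Finite.subset (finite_size_le n) (fun _ h => le_of_eq h)

instance finite_sn_size (n : ℕ) : Finite {t : Term // t.StronglyNormalizing ∧ t.size = n} :=
  Set.Finite.subset (finite_size_le n) (fun _ h => le_of_eq h.2)

/-- Decomposition of terms by head constructor. -/
def decomp : ℕ ⊕ ((Term × Term) ⊕ Term) ≃ Term where
  toFun
    | .inl k => .var k
    | .inr (.inl p) => .app p.1 p.2
    | .inr (.inr M) => .abs M
  invFun
    | .var k => .inl k
    | .app M N => .inr (.inl (M, N))
    | .abs M => .inr (.inr M)
  left_inv := by rintro (k | p | M) <;> rfl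
  right_inv := by rintro (k | ⟨M, N⟩ | M) <;> rfl

theorem tsum_term (f : Term → ℝ≥0∞) :
    ∑' t, f t = ∑' k, f (.var k) + (∑' p : Term × Term, f (.app p.1 p.2) + ∑' t, f (.abs t)) := by
  rw [← decomp.tsum_eq f, Summable.tsum_sum ENNReal.summable ENNReal.summable,
    Summable.tsum_sum ENNReal.summable ENNReal.summable]
  rfl

theorem tsum_var (x : ℝ) (h0 : 0 < x) (h1 : x < 1) :
    ∑' k : ℕ, (ENNReal.ofReal x) ^ (k + 1) = ENNReal.ofReal (x / (1 - x)) := by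
  simp_rw [pow_succ]
  rw [ENNReal.tsum_mul_right, ENNReal.tsum_geometric, div_eq_inv_mul,
    ENNReal.ofReal_mul (by apply inv_nonneg.2; linarith), ENNReal.ofReal_inv_of_pos (by linarith),
    ENNReal.ofReal_sub _ h0.le, ENNReal.ofReal_one]

theorem tsum_pair (f g : Term → ℝ≥0∞) :
    ∑' p : Term × Term, f p.1 * g p.2 = (∑' t, f t) * ∑' t, g t := by
  rw [ENNReal.tsum_prod (f := fun a b => f a * g b)]
  simp_rw [ENNReal.tsum_mul_left, ENNReal.tsum_mul_right]

/-- All terms. -/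
theorem gf_eq (x : ℝ) (h0 : 0 < x) (h1 : x < 1) :
    ∑' t : Term, (ENNReal.ofReal x) ^ t.size = ENNReal.ofReal (x / (1 - x)) +
      (ENNReal.ofReal x * ((∑' t : Term, (ENNReal.ofReal x) ^ t.size) *
        ∑' t : Term, (ENNReal.ofReal x) ^ t.size) +
      ENNReal.ofReal x * ∑' t : Term, (ENNReal.ofReal x) ^ t.size) := by
  conv_lhs => rw [tsum_term]
  simp only [size]
  rw [tsum_var x h0 h1, ← tsum_pair, ← ENNReal.tsum_mul_left, ← ENNReal.tsum_mul_left]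
  congr 1
  congr 1
  · congr 1; ext p; ring
  · congr 1; ext p; ring

theorem gf_top (x : ℝ) (h0 : 0 < x) (h1 : x < 1) (hd : (1 - x) ^ 3 < 4 * x ^ 2) :
    ∑' t : Term, (ENNReal.ofReal x) ^ t.size = ∞ := by
  by_contra hne
  have h := gf_eq x h0 h1
  generalize ∑' t : Term, (ENNReal.ofReal x) ^ t.size = F at hne h
  lift F to NNReal using hne
  have h2 := congrArg ENNReal.toReal h
  have hx : 0 < 1 - x := by linarith
  rw [ENNReal.toReal_add (by finiteness) (by finiteness),
    ENNReal.toReal_add (by finiteness) (by finiteness)] at h2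
  simp only [ENNReal.toReal_mul, ENNReal.toReal_ofReal h0.le,
    ENNReal.toReal_ofReal (div_pos h0 hx).le, ENNReal.coe_toReal] at h2
  generalize (F : ℝ) = S at h2
  have h3 : S * (1 - x) = x + (x * (S * S) + x * S) * (1 - x) := by
    field_simp at h2
    linarith
  nlinarith [mul_nonneg hx.le (sq_nonneg (2 * x * S - (1 - x)))]

theorem gf_L (X : ℝ≥0∞) : ∑' t : Term, X ^ t.size = ∑' n, (L n : ℝ≥0∞) * X ^ n := by
  rw [← (Equiv.sigmaFiberEquiv size).tsum_eq, ENNReal.tsum_sigma']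
  congr 1; ext n
  have : ∀ b : {t : Term // t.size = n},
      X ^ (size (Equiv.sigmaFiberEquiv size ⟨n, b⟩)) = X ^ n := by
    intro b
    congr 1
    exact b.2
  simp_rw [this]
  have := Fintype.ofFinite {t : Term // t.size = n}
  rw [tsum_fintype, Finset.sum_const, L, Nat.card_eq_fintype_card, nsmul_eq_mul, Finset.card_univ]

theorem L_mul (m n : ℕ) : L m * L n ≤ L (m + n + 1) := by
  unfold L
  rw [← Nat.card_prod]
  refine Nat.card_le_card_of_injective
    (fun p : {t : Term // t.size = m} × {t : Term // t.size = n} =>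
      (⟨.app p.1.1 p.2.1, by simp [size, p.1.2, p.2.2]⟩ : {t : Term // t.size = m + n + 1})) ?_
  rintro ⟨⟨a, ha⟩, ⟨b, hb⟩⟩ ⟨⟨c, hc⟩, ⟨d, hd⟩⟩ h
  simpa using h

theorem L_pos (n : ℕ) : 1 ≤ L (n + 1) := by
  have : Nonempty {t : Term // t.size = n + 1} := ⟨⟨.var n, rfl⟩⟩
  exact Nat.card_pos

theorem exists_big (x y : ℝ) (h0 : 0 < x) (hxy : x < y) (h1 : y < 1)
    (hd : (1 - x) ^ 3 < 4 * x ^ 2) : ∃ m, 1 < (L m : ℝ) * y ^ (m + 1) := by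
  by_contra! hc
  have ht := gf_top x h0 (by linarith) hd
  rw [gf_L] at ht
  have hy : 0 < y := by linarith
  have hle : ∀ n, (L n : ℝ≥0∞) * ENNReal.ofReal x ^ n ≤
      ENNReal.ofReal (1 / y) * ENNReal.ofReal (x / y) ^ n := by
    intro n
    rw [← ENNReal.ofReal_natCast, ← ENNReal.ofReal_pow h0.le, ← ENNReal.ofReal_pow (by positivity),
      ← ENNReal.ofReal_mul (by positivity), ← ENNReal.ofReal_mul (by positivity)]
    apply ENNReal.ofReal_le_ofReal
    rw [div_pow, div_mul_div_comm, le_div_iff₀ (by positivity)]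
    have h2 := mul_le_mul_of_nonneg_left (hc n) (pow_nonneg h0.le n)
    calc _ = x ^ n * (L n * y ^ (n + 1)) := by ring
      _ ≤ _ := by linarith
  have hlt : ENNReal.ofReal (x / y) < 1 := by
    rw [ENNReal.ofReal_lt_one]
    rw [div_lt_one hy]; exact hxy
  have := ENNReal.tsum_le_tsum hle
  rw [ht, ENNReal.tsum_mul_left, ENNReal.tsum_geometric, top_le_iff] at this
  revert this
  apply ENNReal.mul_ne_top (by finiteness)
  rw [ENNReal.inv_ne_top]
  exact (tsub_pos_of_lt hlt).ne'

theorem L_lower (y : ℝ) (hy : 0 < y) (h1 : y < 1) (m : ℕ) (hm : 1 < (L m : ℝ) * y ^ (m + 1))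
    (n : ℕ) (hn : 1 ≤ n) : y ^ (m + 1) ≤ (L n : ℝ) * y ^ n := by
  induction n using Nat.strong_induction_on with
  | _ n ih =>
    by_cases hle : n ≤ m + 1
    · obtain ⟨k, rfl⟩ := Nat.exists_eq_add_of_le' hn
      have h2 : (1 : ℝ) ≤ L (k + 1) := by exact_mod_cast L_pos k
      calc y ^ (m + 1) ≤ y ^ (k + 1) := pow_le_pow_of_le_one hy.le h1.le hle
        _ ≤ _ := le_mul_of_one_le_left (by positivity) h2
    · obtain ⟨k, rfl⟩ : ∃ k, n = m + k + 1 := ⟨n - m - 1, by omega⟩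
      have hk := ih k (by omega) (by omega)
      have h2 : (L m : ℝ) * L k ≤ L (m + k + 1) := by exact_mod_cast L_mul m k
      calc y ^ (m + 1) ≤ L k * y ^ k := hk
        _ ≤ (L m * y ^ (m + 1)) * (L k * y ^ k) := le_mul_of_one_le_left (by positivity) hm.le
        _ = (L m * L k) * y ^ (m + k + 1) := by ring
        _ ≤ _ := by gcongr

open Classical in
/-- Weight of the `om om`-free terms of height at most `n`. -/
noncomputable def w (X : ℝ≥0∞) : ℕ → Term → ℝ≥0∞
  | _, var k => X ^ (k + 1)
  | 0, app _ _ => 0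
  | 0, abs _ => 0
  | n + 1, app M N => if (M, N) = (om, om) then 0 else X * (w X n M * w X n N)
  | n + 1, abs M => X * w X n M

theorem w_eq (X : ℝ≥0∞) (t : Term) (ht : NoOm t) (n : ℕ) (hn : t.size ≤ n) :
    w X n t = X ^ t.size := by
  induction t generalizing n with
  | var k => cases n <;> rfl
  | app M N ihM ihN =>
    obtain ⟨hM, hN, hne⟩ := ht
    obtain _ | n := n
    · simp [size] at hn
    · simp only [size] at hn
      have : ¬ ((M, N) = (om, om)) := by simpa using hne
      rw [w, if_neg this, ihM hM n (by omega), ihN hN n (by omega), size]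
      ring
  | abs M ih =>
    obtain _ | n := n
    · simp [size] at hn
    · simp only [size] at hn
      rw [w, ih ht n (by omega), size]
      ring

theorem w_om (X : ℝ≥0∞) (n : ℕ) : w X (n + 2) om = X ^ 4 := by
  cases n <;> (simp [om, w]; ring)

theorem sum_w_zero (x : ℝ) (h0 : 0 < x) (h1 : x < 1) :
    ∑' t, w (ENNReal.ofReal x) 0 t = ENNReal.ofReal (x / (1 - x)) := by
  rw [tsum_term]
  simp only [w, tsum_zero, add_zero]
  exact tsum_var x h0 h1

theorem sum_w_succ (x : ℝ) (h0 : 0 < x) (h1 : x < 1) (n : ℕ) :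
    ∑' t, w (ENNReal.ofReal x) (n + 1) t +
      ENNReal.ofReal x * (w (ENNReal.ofReal x) n om * w (ENNReal.ofReal x) n om) =
    ENNReal.ofReal (x / (1 - x)) +
      (ENNReal.ofReal x * ((∑' t, w (ENNReal.ofReal x) n t) * ∑' t, w (ENNReal.ofReal x) n t) +
      ENNReal.ofReal x * ∑' t, w (ENNReal.ofReal x) n t) := by
  classical
  rw [tsum_term, ← tsum_pair, ← ENNReal.tsum_mul_left, ← ENNReal.tsum_mul_left,
    ← tsum_var x h0 h1]
  rw [ENNReal.tsum_eq_add_tsum_ite (f := fun p : Term × Term =>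
    ENNReal.ofReal x * (w (ENNReal.ofReal x) n p.1 * w (ENNReal.ofReal x) n p.2)) (om, om)]
  simp only [w, Prod.mk.eta]
  have : ∀ p : Term × Term, ∀ c : ℝ≥0∞,
     (@ite _ (p = (om, om)) (Classical.propDecidable _) 0 c) = if p = (om, om) then 0 else c := by
    intro p c; congr
  simp only [this]
  ring

theorem sum_w_step (x : ℝ) (h0 : 0 < x) (h1 : x < 1) (n : ℕ) (y z : ℝ) (hy : 0 ≤ y)
    (h : ∑' t, w (ENNReal.ofReal x) n t ≤ ENNReal.ofReal y)
    (hz : x / (1 - x) + (x * (y * y) + x * y) ≤ z) :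
    ∑' t, w (ENNReal.ofReal x) (n + 1) t +
      ENNReal.ofReal x * (w (ENNReal.ofReal x) n om * w (ENNReal.ofReal x) n om) ≤
    ENNReal.ofReal z := by
  rw [sum_w_succ x h0 h1]
  have hx : 0 < 1 - x := by linarith
  refine le_trans ?_ (ENNReal.ofReal_le_ofReal hz)
  rw [ENNReal.ofReal_add (by positivity) (by positivity),
    ENNReal.ofReal_add (by positivity) (by positivity), ENNReal.ofReal_mul h0.le,
    ENNReal.ofReal_mul h0.le, ENNReal.ofReal_mul hy]
  gcongr

theorem sum_w_bound (n : ℕ) :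
    ∑' t, w (ENNReal.ofReal 0.295599) n t ≤ ENNReal.ofReal 1.1915 := by
  have b0 : ∑' t, w (ENNReal.ofReal 0.295599) 0 t ≤ ENNReal.ofReal 0.43 := by
    rw [sum_w_zero _ (by norm_num) (by norm_num)]
    exact ENNReal.ofReal_le_ofReal (by norm_num)
  have b1 : ∑' t, w (ENNReal.ofReal 0.295599) 1 t ≤ ENNReal.ofReal 0.7 :=
    le_trans le_self_add (sum_w_step _ (by norm_num) (by norm_num) 0 _ 0.7 (by norm_num) b0
      (by norm_num))
  have b2 : ∑' t, w (ENNReal.ofReal 0.295599) 2 t ≤ ENNReal.ofReal 1.1915 :=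
    le_trans le_self_add (sum_w_step _ (by norm_num) (by norm_num) 1 _ 1.1915 (by norm_num) b1
      (by norm_num))
  match n with
  | 0 => exact b0.trans (ENNReal.ofReal_le_ofReal (by norm_num))
  | 1 => exact b1.trans (ENNReal.ofReal_le_ofReal (by norm_num))
  | n + 2 =>
    induction n with
    | zero => exact b2
    | succ n ih =>
      have h := sum_w_step _ (by norm_num) (by norm_num) (n + 2) _ (1.1915 + 0.295599 ^ 9)
        (by norm_num) ih (by norm_num)
      rw [w_om, ENNReal.ofReal_add (by norm_num) (by norm_num),
        ENNReal.ofReal_pow (by norm_num)] at h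
      have e : ENNReal.ofReal 0.295599 * (ENNReal.ofReal 0.295599 ^ 4 * ENNReal.ofReal 0.295599 ^ 4)
        = ENNReal.ofReal 0.295599 ^ 9 := by ring
      rw [e] at h
      exact (ENNReal.add_le_add_iff_right (by finiteness)).1 h

theorem sn_upper (n : ℕ) :
    (Nat.card {t : Term // t.StronglyNormalizing ∧ t.size = n} : ℝ) * 0.295599 ^ n ≤ 1.1915 := by
  have h : (Nat.card {t : Term // t.StronglyNormalizing ∧ t.size = n} : ℝ≥0∞) *
      ENNReal.ofReal 0.295599 ^ n ≤ ENNReal.ofReal 1.1915 := by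
    refine le_trans ?_ (sum_w_bound n)
    refine le_trans ?_ (ENNReal.tsum_comp_le_tsum_of_injective
      (Subtype.val_injective (p := fun t : Term => t.StronglyNormalizing ∧ t.size = n)) _)
    have e : ∀ t : {t : Term // t.StronglyNormalizing ∧ t.size = n},
        w (ENNReal.ofReal 0.295599) n t.1 = ENNReal.ofReal 0.295599 ^ n := by
      rintro ⟨t, ht, hs⟩
      rw [w_eq _ t (noOm_of_sn t ht) n hs.le, hs]
    simp_rw [e]
    have := Fintype.ofFinite {t : Term // t.StronglyNormalizing ∧ t.size = n}
    rw [tsum_fintype, Finset.sum_const, Nat.card_eq_fintype_card, nsmul_eq_mul, Finset.card_univ]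
  rw [← ENNReal.ofReal_natCast, ← ENNReal.ofReal_pow (by norm_num),
    ← ENNReal.ofReal_mul (by positivity)] at h
  exact (ENNReal.ofReal_le_ofReal_iff (by norm_num)).1 h

end Term

theorem density_stronglyNormalizing_zero :
    Filter.Tendsto
      (fun n : ℕ =>
        (Nat.card {t : Term // t.StronglyNormalizing ∧ t.size = n} : ℝ) / (L n : ℝ))
      Filter.atTop (nhds 0) := by
  obtain ⟨m, hm⟩ := Term.exists_big 0.295598 0.2955985 (by norm_num) (by norm_num) (by norm_num)
    (by norm_num)
  have hlow := Term.L_lower 0.2955985 (by norm_num) (by norm_num) m hm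
  have hc : (0 : ℝ) < 0.2955985 ^ (m + 1) := by positivity
  generalize (0.2955985 : ℝ) ^ (m + 1) = c at hlow hc
  have hlim : Filter.Tendsto (fun n : ℕ => (1.1915 / c) * (0.2955985 / 0.295599 : ℝ) ^ n)
      Filter.atTop (nhds 0) := by
    have := (tendsto_pow_atTop_nhds_zero_of_lt_one (r := (0.2955985 / 0.295599 : ℝ))
      (by norm_num) (by norm_num)).const_mul (1.1915 / c)
    simpa only [mul_zero] using this
  refine squeeze_zero' (Filter.Eventually.of_forall fun n => by positivity) ?_ hlim
  filter_upwards [Filter.eventually_ge_atTop 1] with n hn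
  have h1 := hlow n hn
  have h2 := Term.sn_upper n
  generalize (Nat.card {t : Term // t.StronglyNormalizing ∧ t.size = n} : ℝ) = a at h2
  have hp : (0 : ℝ) < 0.2955985 ^ n := by positivity
  have hq : (0 : ℝ) < 0.295599 ^ n := by positivity
  rw [div_pow]
  generalize (0.2955985 : ℝ) ^ n = p at *
  generalize (0.295599 : ℝ) ^ n = q at *
  have hL : (0 : ℝ) < L n := by
    by_contra hneg
    have : (L n : ℝ) * p ≤ 0 := mul_nonpos_of_nonpos_of_nonneg (not_lt.1 hneg) hp.le
    linarith
  rw [div_mul_div_comm, div_le_div_iff₀ hL (by positivity)]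
  calc a * (c * q) = (a * q) * c := by ring
    _ ≤ 1.1915 * c := by gcongr
    _ ≤ 1.1915 * (L n * p) := by gcongr
    _ = _ := by ring
end
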